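/- Let q be a prime power and let ν, m₁, m₂, t be positive integers with m₁ ≥ m₂ ≥ t+1 and 2ν ≥ 2m₁ + m₂ + t + 3, and suppose moreover that m₂ > 2t or (m₁,m₂,t) ∈ {(2,2,1), (3,2,1)}. Suppose ℱ₁ ⊆ 𝒫_{m₁} and ℱ₂ ⊆ 𝒫_{m₂} are non-trivial cross t-intersecting families such that |ℱ₁|·|ℱ₂| ≥ |𝒢₁|·|𝒢₂| for every pair of non-trivial cross t-intersecting families 𝒢₁ ⊆ 𝒫_{m₁}, 𝒢₂ ⊆ 𝒫_{m₂}. Then there exist M ∈ 𝒫_{m₂+1} and a t-dimensional subspace T of M such that either (i) ℱ₁ = 𝒞₁(M,T;m₁,t) and ℱ₂ = 𝒞₂(M,T;m₂), or (ii) m₁ = m₂ and ℱ₁ = 𝒞₂(M,T;m₁) and ℱ₂ = 𝒞₁(M,T;m₂,t). -/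

import Mathlib

open Finset Module

noncomputable section

/-- Gaussian binomial coefficient `[n choose k]_q` as a rational number. -/
def gaussBinom (q n k : ℕ) : ℚ :=
  ∏ i ∈ Finset.range k, ((q : ℚ) ^ ((n : ℤ) - i) - 1) / ((q : ℚ) ^ ((k : ℤ) - i) - 1)

/-- `N'(a; m; 2ν)`, the number of `m`-dim totally isotropic subspaces containing
a fixed `a`-dim one. -/
def Nprime (q a m ν : ℕ) : ℚ :=
  ∏ i ∈ Finset.Icc 1 (m - a), ((q : ℚ) ^ (2 * ((ν : ℤ) - m + i)) - 1) / ((q : ℚ) ^ (i : ℤ) - 1)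

variable {K V : Type*} [Field K] [AddCommGroup V] [Module K V]

/-- A subspace is totally isotropic w.r.t. the bilinear form `f`. -/
def TotallyIsotropic (f : V →ₗ[K] V →ₗ[K] K) (W : Submodule K V) : Prop :=
  ∀ x ∈ W, ∀ y ∈ W, f x y = 0

/-- `polar f m` = `𝒫_m`, the set of `m`-dimensional totally isotropic subspaces. -/
def polar (f : V →ₗ[K] V →ₗ[K] K) (m : ℕ) : Set (Submodule K V) :=
  {W | TotallyIsotropic f W ∧ finrank K W = m}

/-- `X` is a `t`-cover of the family `ℱ`. -/
def IsTCover (f : V →ₗ[K] V →ₗ[K] K) (t : ℕ) (ℱ : Set (Submodule K V))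
    (X : Submodule K V) : Prop :=
  TotallyIsotropic f X ∧ ∀ F ∈ ℱ, t ≤ finrank K ↥(X ⊓ F)

/-- `τ_t(ℱ)`, the minimum dimension of a `t`-cover of `ℱ`. -/
def tauCover (f : V →ₗ[K] V →ₗ[K] K) (t : ℕ) (ℱ : Set (Submodule K V)) : ℕ :=
  sInf {x | ∃ X, IsTCover f t ℱ X ∧ finrank K ↥X = x}

def C1 (f : V →ₗ[K] V →ₗ[K] K) (M T : Submodule K V) (m t : ℕ) : Set (Submodule K V) :=
  {F | F ∈ polar f m ∧ T ≤ F ∧ t + 1 ≤ finrank K ↥(F ⊓ M)}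

def C2 (f : V →ₗ[K] V →ₗ[K] K) (M T : Submodule K V) (m : ℕ) : Set (Submodule K V) :=
  {F | F ∈ polar f m ∧ T ≤ F} ∪ {F | F ∈ polar f m ∧ F ≤ M}

def C3 (f : V →ₗ[K] V →ₗ[K] K) (S : Submodule K V) (m : ℕ) : Set (Submodule K V) :=
  {F | F ∈ polar f m ∧ S ≤ F}

def C4 (f : V →ₗ[K] V →ₗ[K] K) (S : Submodule K V) (m t : ℕ) : Set (Submodule K V) :=
  {F | F ∈ polar f m ∧ t ≤ finrank K ↥(F ⊓ S)}

def s0 (q ν m s t : ℕ) : ℚ :=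
  gaussBinom q (s - t) 1 * Nprime q (t + 1) m ν - q * gaussBinom q (s - t) 2 * Nprime q (t + 2) m ν



section Work
open Classical

theorem exists_sub_finrank [FiniteDimensional K V] (W : Submodule K V) (n : ℕ)
    (h : n ≤ finrank K W) : ∃ U : Submodule K V, U ≤ W ∧ finrank K U = n := by
  obtain ⟨s, hs⟩ := exists_linearIndependent_of_le_finrank h
  refine ⟨(Submodule.span K (Set.range s)).map W.subtype, Submodule.map_subtype_le _ _, ?_⟩
  rw [(Submodule.equivMapOfInjective W.subtype W.injective_subtype _).symm.finrank_eq]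
  rw [finrank_span_eq_card hs, Fintype.card_fin]

theorem finrank_sup_span [FiniteDimensional K V] (X : Submodule K V) (v : V) (hv : v ∉ X) :
    finrank K ↥(X ⊔ Submodule.span K {v}) = finrank K X + 1 := by
  have hv0 : v ≠ 0 := fun h => hv (h ▸ X.zero_mem)
  have h := Submodule.finrank_sup_add_finrank_inf_eq X (Submodule.span K {v})
  rw [finrank_span_singleton hv0] at h
  have h2 : X ⊓ Submodule.span K {v} = ⊥ := by
    rw [eq_bot_iff]
    intro x hx
    obtain ⟨hx1, hx2⟩ := Submodule.mem_inf.1 hx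
    obtain ⟨c, rfl⟩ := Submodule.mem_span_singleton.1 hx2
    by_cases hc : c = 0
    · simp [hc]
    · exact absurd ((X.smul_mem_iff hc).1 hx1) hv
  rw [h2, finrank_bot] at h
  omega

theorem sup_span_le {X A : Submodule K V} {v : V} :
    X ⊔ Submodule.span K {v} ≤ A ↔ X ≤ A ∧ v ∈ A := by
  rw [sup_le_iff, Submodule.span_singleton_le_iff_mem]

theorem TI_mono {f : V →ₗ[K] V →ₗ[K] K} {X Y : Submodule K V} (h : X ≤ Y)
    (hY : TotallyIsotropic f Y) : TotallyIsotropic f X :=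
  fun x hx y hy => hY x (h hx) y (h hy)

theorem f_swap {f : V →ₗ[K] V →ₗ[K] K} (halt : ∀ x, f x x = 0) (x y : V) : f x y = - f y x := by
  have h := halt (x + y)
  simp only [map_add, LinearMap.add_apply, halt, zero_add, add_zero] at h
  exact eq_neg_of_add_eq_zero_right h

theorem TI_sup {f : V →ₗ[K] V →ₗ[K] K} (halt : ∀ x, f x x = 0) {X Y : Submodule K V}
    (hX : TotallyIsotropic f X) (hY : TotallyIsotropic f Y)
    (hXY : ∀ x ∈ X, ∀ y ∈ Y, f x y = 0) : TotallyIsotropic f (X ⊔ Y) := by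
  intro u hu w hw
  obtain ⟨x, hx, y, hy, rfl⟩ := Submodule.mem_sup.1 hu
  obtain ⟨x', hx', y', hy', rfl⟩ := Submodule.mem_sup.1 hw
  simp only [map_add, LinearMap.add_apply]
  rw [hX x hx x' hx', hXY x hx y' hy', f_swap halt y x', hXY x' hx' y hy, hY y hy y' hy']
  simp

theorem TI_span {f : V →ₗ[K] V →ₗ[K] K} (halt : ∀ x, f x x = 0) (v : V) :
    TotallyIsotropic f (Submodule.span K {v}) := by
  intro x hx y hy
  obtain ⟨c, rfl⟩ := Submodule.mem_span_singleton.1 hx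
  obtain ⟨d, rfl⟩ := Submodule.mem_span_singleton.1 hy
  simp [halt]

/-- number of m-dimensional t.i. subspaces through an a-dimensional one -/
def NN (Q : ℝ) (ν a m : ℕ) : ℝ :=
  if m < a then 0 else ∏ i ∈ Finset.Ico a m, (Q ^ (2 * (ν - i)) - 1) / (Q ^ (m - i) - 1)

theorem NN_self (Q : ℝ) (ν m : ℕ) : NN Q ν m m = 1 := by simp [NN]

theorem NN_gt (Q : ℝ) (ν : ℕ) {a m : ℕ} (h : m < a) : NN Q ν a m = 0 := by simp [NN, h]

theorem NN_rec {Q : ℝ} (hQ : 2 ≤ Q) (ν : ℕ) {a m : ℕ} (h : a < m) :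
    NN Q ν a m * (Q ^ (m - a) - 1) = (Q ^ (2 * (ν - a)) - 1) * NN Q ν (a + 1) m := by
  have h1 : ¬ m < a := by omega
  have h2 : ¬ m < a + 1 := by omega
  have h3 : (1:ℝ) < Q ^ (m - a) := one_lt_pow₀ (by linarith) (by omega)
  simp only [NN, h1, h2, if_false]
  rw [Finset.prod_eq_prod_Ico_succ_bot h]
  have : Q ^ (m - a) - 1 ≠ 0 := by linarith
  field_simp

theorem NN_nonneg {Q : ℝ} (hQ : 2 ≤ Q) (ν a m : ℕ) : 0 ≤ NN Q ν a m := by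
  unfold NN
  split_ifs
  · exact le_rfl
  · refine Finset.prod_nonneg fun i _ => div_nonneg ?_ ?_ <;>
    linarith [one_le_pow₀ (M₀ := ℝ) (by linarith : (1:ℝ) ≤ Q) (n := 2 * (ν - i)),
      one_le_pow₀ (M₀ := ℝ) (by linarith : (1:ℝ) ≤ Q) (n := m - i)]

theorem NN_pos {Q : ℝ} (hQ : 2 ≤ Q) {ν a m : ℕ} (h : a ≤ m) (hm : m ≤ ν) : 0 < NN Q ν a m := by
  unfold NN
  rw [if_neg (by omega)]
  refine Finset.prod_pos fun i hi => ?_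
  rw [Finset.mem_Ico] at hi
  have h1 : (1:ℝ) < Q ^ (m - i) := one_lt_pow₀ (by linarith) (by omega)
  have h2 : (1:ℝ) < Q ^ (2 * (ν - i)) := one_lt_pow₀ (by linarith) (by omega)
  exact div_pos (by linarith) (by linarith)

/-- decay -/
theorem NN_decay {Q : ℝ} (hQ : 2 ≤ Q) {ν a m e : ℕ} (hm : m ≤ ν) (he : e + a + m ≤ 2 * ν) :
    NN Q ν (a + 1) m * Q ^ e ≤ NN Q ν a m := by
  rcases lt_or_ge a m with h | h
  · have h3 : (1:ℝ) < Q ^ (m - a) := one_lt_pow₀ (by linarith) (by omega)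
    have hr := NN_rec hQ ν h
    have h5 : Q ^ e * Q ^ (m - a) ≤ Q ^ (2 * (ν - a)) := by
      rw [← pow_add]; exact pow_le_pow_right₀ (by linarith) (by omega)
    have h6 : (1:ℝ) ≤ Q ^ e := one_le_pow₀ (by linarith)
    have h7 := NN_nonneg hQ ν (a+1) m
    have : NN Q ν (a + 1) m * Q ^ e * (Q ^ (m - a) - 1) ≤ NN Q ν a m * (Q ^ (m - a) - 1) := by
      rw [hr]
      nlinarith [mul_le_mul_of_nonneg_left h5 h7, mul_le_mul_of_nonneg_left h6 h7]
    exact le_of_mul_le_mul_right this (by linarith)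
  · rw [NN_gt Q ν (by omega : m < a + 1), zero_mul]
    exact NN_nonneg hQ ν a m

variable [Fintype K] [Fintype V]

instance instFD : FiniteDimensional K V := Module.Finite.of_finite

instance instFS : Fintype (Submodule K V) := Fintype.ofFinite _

theorem card_sub (Y : Submodule K V) :
    ((univ.filter (fun v : V => v ∈ Y)).card : ℝ) = (Fintype.card K : ℝ) ^ finrank K Y := by
  have h := Module.card_eq_pow_finrank (K := K) (V := Y)
  rw [Fintype.card_subtype] at h
  exact_mod_cast h

theorem card_diff (Y X : Submodule K V) :
    ((univ.filter (fun v : V => v ∈ Y ∧ v ∉ X)).card : ℝ)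
      = (Fintype.card K : ℝ) ^ finrank K Y - (Fintype.card K : ℝ) ^ finrank K ↥(Y ⊓ X) := by
  rw [← card_sub, ← card_sub]
  have h := Finset.card_filter_add_card_filter_not (s := univ.filter (fun v : V => v ∈ Y)) (fun v => v ∈ X)
  rw [Finset.filter_filter, Finset.filter_filter] at h
  have h2 : (univ.filter (fun v : V => v ∈ Y ⊓ X)) = (univ.filter (fun v : V => v ∈ Y ∧ v ∈ X)) := by
    ext; simp
  rw [h2]
  rw [eq_sub_iff_add_eq, add_comm]
  exact_mod_cast h

theorem dcX (𝒜 : Finset (Submodule K V)) (X W : Submodule K V) :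
    ∑ A ∈ 𝒜.filter (fun A => X ≤ A), ((Fintype.card K : ℝ) ^ finrank K ↥(A ⊓ W) -
        (Fintype.card K : ℝ) ^ finrank K ↥(W ⊓ X))
      = ∑ v ∈ univ.filter (fun v : V => v ∈ W ∧ v ∉ X),
        ((𝒜.filter (fun A => X ⊔ Submodule.span K {v} ≤ A)).card : ℝ) := by
  have h := Finset.sum_card_bipartiteAbove_eq_sum_card_bipartiteBelow
    (fun (A : Submodule K V) (v : V) => v ∈ A)
    (s := 𝒜.filter (fun A => X ≤ A)) (t := univ.filter (fun v : V => v ∈ W ∧ v ∉ X))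
  have h' : ∑ a ∈ 𝒜.filter (fun A => X ≤ A), ((bipartiteAbove (fun (A : Submodule K V) (v : V) => v ∈ A) (univ.filter (fun v : V => v ∈ W ∧ v ∉ X)) a).card : ℝ)
    = ∑ b ∈ univ.filter (fun v : V => v ∈ W ∧ v ∉ X), ((bipartiteBelow (fun (A : Submodule K V) (v : V) => v ∈ A) (𝒜.filter (fun A => X ≤ A)) b).card : ℝ) := by
    exact_mod_cast h
  convert h' using 1
  · refine Finset.sum_congr rfl fun A hA => ?_
    have hXA := (Finset.mem_filter.1 hA).2
    have e : A ⊓ W ⊓ X = W ⊓ X := by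
      rw [inf_assoc]; exact inf_eq_right.2 (inf_le_right.trans hXA)
    rw [← e, ← card_diff]
    congr 2
    ext v
    simp [bipartiteAbove]
    tauto
  · refine Finset.sum_congr rfl fun v _ => ?_
    congr 2
    ext A
    simp only [bipartiteBelow, Finset.mem_filter, sup_span_le]
    tauto

theorem two_le_Q : (2:ℝ) ≤ (Fintype.card K : ℝ) := by
  have : 1 < Fintype.card K := Fintype.one_lt_card
  exact_mod_cast this

theorem onestep (𝒜 : Finset (Submodule K V)) (X W : Submodule K V) (t : ℕ) (c : ℝ)
    (hA : ∀ A ∈ 𝒜, X ≤ A → t ≤ finrank K ↥(A ⊓ W))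
    (hc : ∀ v ∈ W, v ∉ X → ((𝒜.filter (fun A => X ⊔ Submodule.span K {v} ≤ A)).card : ℝ) ≤ c) :
    ((𝒜.filter (fun A => X ≤ A)).card : ℝ) *
      ((Fintype.card K : ℝ) ^ t - (Fintype.card K : ℝ) ^ finrank K ↥(W ⊓ X))
    ≤ ((Fintype.card K : ℝ) ^ finrank K W - (Fintype.card K : ℝ) ^ finrank K ↥(W ⊓ X)) * c := by
  have h := dcX 𝒜 X W
  have h1 : ∑ v ∈ univ.filter (fun v : V => v ∈ W ∧ v ∉ X),
        ((𝒜.filter (fun A => X ⊔ Submodule.span K {v} ≤ A)).card : ℝ) ≤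
      ∑ v ∈ univ.filter (fun v : V => v ∈ W ∧ v ∉ X), c := by
    refine Finset.sum_le_sum fun v hv => ?_
    have := (Finset.mem_filter.1 hv).2
    exact hc v this.1 this.2
  rw [Finset.sum_const, nsmul_eq_mul, card_diff] at h1
  rw [← h] at h1
  refine le_trans ?_ h1
  rw [← nsmul_eq_mul, ← Finset.sum_const]
  refine Finset.sum_le_sum fun A hA' => ?_
  have := (Finset.mem_filter.1 hA')
  have := pow_le_pow_right₀ (by linarith [two_le_Q (K := K)] : (1:ℝ) ≤ (Fintype.card K : ℝ)) (hA A this.1 this.2)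
  linarith

def fam (f : V →ₗ[K] V →ₗ[K] K) (m : ℕ) : Finset (Submodule K V) :=
  univ.filter (fun F => F ∈ polar f m)

theorem mem_fam {f : V →ₗ[K] V →ₗ[K] K} {m : ℕ} {F : Submodule K V} :
    F ∈ fam f m ↔ F ∈ polar f m := by simp [fam]

/-- exact count -/
theorem count {f : V →ₗ[K] V →ₗ[K] K} (halt : ∀ x, f x x = 0)
    (hnd : ∀ x, (∀ y, f x y = 0) → x = 0) {ν : ℕ} (hV : finrank K V = 2 * ν)
    (d : ℕ) : ∀ (a : ℕ) (X : Submodule K V), TotallyIsotropic f X → finrank K X = a → a + d ≤ ν →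
    (((fam f (a + d)).filter (fun A => X ≤ A)).card : ℝ) = NN (Fintype.card K) ν a (a + d) := by
  induction d with
  | zero =>
    intro a X hX ha _
    have : (fam f (a + 0)).filter (fun A => X ≤ A) = {X} := by
      ext A
      simp only [Finset.mem_filter, mem_fam, Finset.mem_singleton, polar, Set.mem_ofPred_eq]
      constructor
      · rintro ⟨⟨_, h1⟩, h2⟩
        exact (Submodule.eq_of_le_of_finrank_le h2 (by omega)).symm
      · rintro rfl
        exact ⟨⟨hX, ha⟩, le_rfl⟩
    rw [this]
    simp [NN_self]
  | succ d ih =>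
    intro a X hX ha had
    have hQ := two_le_Q (K := K)
    let B : LinearMap.BilinForm K V := f
    have hB : B.Nondegenerate := by
      refine ⟨fun x hx => hnd x hx, fun x hx => hnd x fun y => ?_⟩
      rw [f_swap halt]; exact neg_eq_zero.2 (hx y)
    have hW := LinearMap.BilinForm.finrank_orthogonal hB X
    set W := B.orthogonal X with hWdef
    have hmemW : ∀ v, v ∈ W ↔ ∀ x ∈ X, f x v = 0 := fun v => by
      rw [hWdef, LinearMap.BilinForm.mem_orthogonal_iff]
    have hXW : X ≤ W := fun v hv => (hmemW v).2 fun x hx => hX x hx v hv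
    have h := dcX (fam f (a + (d+1))) X W
    rw [inf_eq_right.2 hXW, ha] at h
    have h1 : ∀ A ∈ (fam f (a + (d+1))).filter (fun A => X ≤ A),
        ((Fintype.card K : ℝ) ^ finrank K ↥(A ⊓ W) - (Fintype.card K : ℝ) ^ a) =
        (Fintype.card K : ℝ) ^ (a+(d+1)) - (Fintype.card K : ℝ) ^ a := by
      intro A hA
      obtain ⟨hA1, hA2⟩ := Finset.mem_filter.1 hA
      rw [mem_fam] at hA1
      have : A ≤ W := fun v hv => (hmemW v).2 fun x hx => hA1.1 x (hA2 hx) v hv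
      rw [inf_eq_left.2 this, hA1.2]
    have h2 : ∀ v ∈ univ.filter (fun v : V => v ∈ W ∧ v ∉ X),
        (((fam f (a + (d+1))).filter (fun A => X ⊔ Submodule.span K {v} ≤ A)).card : ℝ)
        = NN (Fintype.card K) ν (a+1) (a + (d+1)) := by
      intro v hv
      obtain ⟨_, hv1, hv2⟩ := Finset.mem_filter.1 hv
      have e : a + (d + 1) = a + 1 + d := by omega
      rw [e]
      refine ih (a+1) _ ?_ ?_ (by omega)
      · refine TI_sup halt hX (TI_span halt v) ?_
        intro x hx y hy
        obtain ⟨c, rfl⟩ := Submodule.mem_span_singleton.1 hy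
        rw [map_smul, (hmemW v).1 hv1 x hx, smul_zero]
      · rw [finrank_sup_span X v hv2, ha]
    rw [Finset.sum_congr rfl h1, Finset.sum_congr rfl h2, Finset.sum_const, Finset.sum_const,
      nsmul_eq_mul, nsmul_eq_mul, card_diff, inf_eq_right.2 hXW, ha, hW, ha, hV] at h
    have hr := NN_rec hQ ν (show a < a + (d+1) by omega)
    set Q : ℝ := (Fintype.card K : ℝ)
    have e1 : Q ^ (a + (d+1)) - Q ^ a = Q ^ a * (Q ^ (a + (d+1) - a) - 1) := by
      rw [show a + (d+1) - a = d + 1 by omega]; ring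
    have e2 : Q ^ (2 * ν - a) - Q ^ a = Q ^ a * (Q ^ (2 * (ν - a)) - 1) := by
      rw [show 2 * ν - a = a + 2 * (ν - a) by omega, pow_add]; ring
    rw [e1, e2] at h
    have hpos : 0 < Q ^ a := by positivity
    have h3 : (1:ℝ) < Q ^ (a + (d+1) - a) := one_lt_pow₀ (by linarith) (by omega)
    have h4 : (((fam f (a + (d+1))).filter (fun A => X ≤ A)).card : ℝ) * (Q ^ (a + (d+1) - a) - 1)
      = NN Q ν a (a + (d+1)) * (Q ^ (a + (d+1) - a) - 1) := by
      rw [hr]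
      apply mul_left_cancel₀ hpos.ne'
      linarith
    exact mul_right_cancel₀ (by linarith) h4

theorem count' {f : V →ₗ[K] V →ₗ[K] K} (halt : ∀ x, f x x = 0)
    (hnd : ∀ x, (∀ y, f x y = 0) → x = 0) {ν : ℕ} (hV : finrank K V = 2 * ν)
    {m : ℕ} (hm : m ≤ ν) (X : Submodule K V) (hX : TotallyIsotropic f X) :
    (((fam f m).filter (fun A => X ≤ A)).card : ℝ) = NN (Fintype.card K) ν (finrank K X) m := by
  rcases lt_or_ge m (finrank K X) with h | h
  · rw [NN_gt _ _ h]
    simp only [Nat.cast_eq_zero, Finset.card_eq_zero, Finset.filter_eq_empty_iff, mem_fam]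
    intro A hA hXA
    have := Submodule.finrank_mono hXA
    have := hA.2
    omega
  · obtain ⟨d, rfl⟩ := Nat.exists_eq_add_of_le h
    exact count halt hnd hV d _ X hX rfl hm

theorem count_le {f : V →ₗ[K] V →ₗ[K] K} (halt : ∀ x, f x x = 0)
    (hnd : ∀ x, (∀ y, f x y = 0) → x = 0) {ν : ℕ} (hV : finrank K V = 2 * ν)
    {m : ℕ} (hm : m ≤ ν) (𝒜 : Finset (Submodule K V)) (h𝒜 : 𝒜 ⊆ fam f m) (X : Submodule K V) :
    ((𝒜.filter (fun A => X ≤ A)).card : ℝ) ≤ NN (Fintype.card K) ν (finrank K X) m := by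
  by_cases hX : TotallyIsotropic f X
  · rw [← count' halt hnd hV hm X hX]
    exact_mod_cast Finset.card_le_card (Finset.filter_subset_filter _ h𝒜)
  · have : 𝒜.filter (fun A => X ≤ A) = ∅ := by
      rw [Finset.filter_eq_empty_iff]
      intro A hA hXA
      exact hX (TI_mono hXA (mem_fam.1 (h𝒜 hA)).1)
    rw [this]
    simpa using NN_nonneg two_le_Q ν _ m

def gg (Q : ℝ) (n : ℕ) : ℝ := (Q ^ n - 1) / (Q - 1)

theorem gg_mul {Q : ℝ} (hQ : 2 ≤ Q) (n : ℕ) : gg Q n * (Q - 1) = Q ^ n - 1 := by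
  unfold gg
  have : Q - 1 ≠ 0 := by linarith
  field_simp

theorem gg_nonneg {Q : ℝ} (hQ : 2 ≤ Q) (n : ℕ) : 0 ≤ gg Q n := by
  unfold gg
  have := one_le_pow₀ (M₀ := ℝ) (by linarith : (1:ℝ) ≤ Q) (n := n)
  exact div_nonneg (by linarith) (by linarith)

theorem gg_succ {Q : ℝ} (hQ : 2 ≤ Q) (n : ℕ) : gg Q (n+1) = Q * gg Q n + 1 := by
  have h1 := gg_mul hQ n
  have h2 := gg_mul hQ (n+1)
  have : Q - 1 ≠ 0 := by linarith
  apply mul_right_cancel₀ this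
  rw [h2, add_mul, mul_assoc, h1]; ring

theorem gg_zero (Q : ℝ) : gg Q 0 = 0 := by simp [gg]

theorem gg_one {Q : ℝ} (hQ : 2 ≤ Q) : gg Q 1 = 1 := by rw [gg_succ hQ, gg_zero]; ring

theorem gg_le {Q : ℝ} (hQ : 2 ≤ Q) (n : ℕ) : gg Q (n+1) ≤ 2 * Q ^ n := by
  have h2 := gg_mul hQ (n+1)
  have h3 : 0 < Q ^ n := by positivity
  have : gg Q (n+1) * (Q - 1) ≤ 2 * Q ^ n * (Q - 1) := by
    rw [h2, pow_succ]; nlinarith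
  exact le_of_mul_le_mul_right this (by linarith)

theorem gg_ge {Q : ℝ} (hQ : 2 ≤ Q) (n : ℕ) : Q ^ n ≤ gg Q (n+1) := by
  have h2 := gg_mul hQ (n+1)
  have h3 : 1 ≤ Q ^ n := one_le_pow₀ (by linarith)
  have : Q ^ n * (Q - 1) ≤ gg Q (n+1) * (Q - 1) := by
    rw [h2, pow_succ]; nlinarith
  exact le_of_mul_le_mul_right this (by linarith)

theorem gg_mono {Q : ℝ} (hQ : 2 ≤ Q) {m n : ℕ} (h : m ≤ n) : gg Q m ≤ gg Q n := by
  unfold gg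
  have := pow_le_pow_right₀ (by linarith : (1:ℝ) ≤ Q) h
  exact div_le_div_of_nonneg_right (by linarith) (by linarith)

theorem gg_pos {Q : ℝ} (hQ : 2 ≤ Q) {n : ℕ} (h : 0 < n) : 0 < gg Q n := by
  have := gg_mono hQ (show 1 ≤ n from h)
  rw [gg_one hQ] at this; linarith

def PP (Q : ℝ) (t x : ℕ) : ℝ := ∏ j ∈ Finset.range t, (Q ^ x - Q ^ j)

theorem PP_rec (Q : ℝ) (t x : ℕ) :
    PP Q t (x+1) * (Q ^ (x+1) - Q ^ t) = (Q ^ (x+1) - 1) * Q ^ t * PP Q t x := by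
  induction t with
  | zero => simp [PP]
  | succ t ih =>
    have e1 : PP Q (t+1) (x+1) = PP Q t (x+1) * (Q ^ (x+1) - Q ^ t) := by
      simp [PP, Finset.prod_range_succ]
    have e2 : PP Q (t+1) x = PP Q t x * (Q ^ x - Q ^ t) := by
      simp [PP, Finset.prod_range_succ]
    rw [e1, ih, e2]; ring

theorem PP_pos {Q : ℝ} (hQ : 2 ≤ Q) {t x : ℕ} (h : t ≤ x) : 0 < PP Q t x := by
  refine Finset.prod_pos fun j hj => ?_
  rw [Finset.mem_range] at hj
  have := pow_lt_pow_right₀ (by linarith : (1:ℝ) < Q) (show j < x by omega)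
  linarith

/-- Gaussian binomial -/
def gb (Q : ℝ) (x t : ℕ) : ℝ := PP Q t x / PP Q t t

theorem gb_self {Q : ℝ} (hQ : 2 ≤ Q) (t : ℕ) : gb Q t t = 1 :=
  div_self (PP_pos hQ le_rfl).ne'

theorem gb_pos {Q : ℝ} (hQ : 2 ≤ Q) {t x : ℕ} (h : t ≤ x) : 0 < gb Q x t :=
  div_pos (PP_pos hQ h) (PP_pos hQ le_rfl)

theorem gb_rec {Q : ℝ} (hQ : 2 ≤ Q) (t i : ℕ) :
    gb Q (t+i+1) t * (Q ^ (i+1) - 1) = (Q ^ (t+i+1) - 1) * gb Q (t+i) t := by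
  have h := PP_rec Q t (t+i)
  have hp := PP_pos hQ (le_refl t)
  have hq : 0 < Q ^ t := by positivity
  unfold gb
  have e : Q ^ (t+i+1) - Q ^ t = Q ^ t * (Q ^ (i+1) - 1) := by ring
  rw [e] at h
  have h' : PP Q t (t+i+1) * (Q ^ (i+1) - 1) = (Q ^ (t+i+1) - 1) * PP Q t (t+i) := by
    apply mul_left_cancel₀ hq.ne'
    linarith
  rw [div_mul_eq_mul_div, h', mul_div_assoc]

theorem gb_succ_self {Q : ℝ} (hQ : 2 ≤ Q) (t : ℕ) : gb Q (t+1) t = gg Q (t+1) := by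
  have h := gb_rec hQ t 0
  simp only [Nat.add_zero, gb_self hQ, zero_add, pow_one, mul_one] at h
  have h2 := gg_mul hQ (t+1)
  have : Q - 1 ≠ 0 := by linarith
  apply mul_right_cancel₀ this
  rw [h2]; linarith [h]

theorem gb_step {Q : ℝ} (hQ : 2 ≤ Q) (t i : ℕ) : gb Q (t+i+1) t ≤ 2 * Q ^ t * gb Q (t+i) t := by
  have h := gb_rec hQ t i
  have hp := gb_pos hQ (show t ≤ t + i by omega)
  have h1 : Q ≤ Q ^ (i+1) := by
    have := pow_le_pow_right₀ (by linarith : (1:ℝ) ≤ Q) (show 1 ≤ i + 1 by omega)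
    simpa using this
  have h2 : 1 ≤ Q ^ t := one_le_pow₀ (by linarith)
  have h3 : Q ^ (t+i+1) - 1 ≤ 2 * Q ^ t * (Q ^ (i+1) - 1) := by
    rw [show t + i + 1 = t + (i+1) by ring, pow_add]
    nlinarith
  have : gb Q (t+i+1) t * (Q ^ (i+1) - 1) ≤ 2 * Q ^ t * gb Q (t+i) t * (Q ^ (i+1) - 1) := by
    rw [h]; nlinarith
  exact le_of_mul_le_mul_right this (by linarith)

theorem num_step {Q : ℝ} (hQ : 2 ≤ Q) {b t j : ℕ} (hj : j < t) (hb : t ≤ b) :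
    Q ^ b - Q ^ j ≤ gg Q (b + 1 - t) * (Q ^ t - Q ^ j) := by
  obtain ⟨u, rfl⟩ := Nat.exists_eq_add_of_lt hj
  obtain ⟨n, rfl⟩ := Nat.exists_eq_add_of_le hb
  rw [show j + u + 1 + n + 1 - (j + u + 1) = n + 1 by omega]
  have h := gg_mul hQ (n+1)
  have h1 : 1 ≤ Q ^ u := one_le_pow₀ (by linarith)
  have h2 : 1 ≤ Q ^ n := one_le_pow₀ (by linarith)
  have h3 : 0 < Q ^ j := by positivity
  refine le_of_mul_le_mul_right ?_ (by linarith : 0 < Q - 1)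
  rw [mul_right_comm, h]
  have : (Q ^ (n+1) - 1) * (Q ^ (j+u+1) - Q^j) - (Q ^ (j+u+1+n) - Q ^ j) * (Q - 1)
    = Q ^ j * Q * ((Q ^ u - 1) * (Q ^ n - 1)) := by ring
  have h4 : 0 ≤ Q ^ j * Q * ((Q ^ u - 1) * (Q ^ n - 1)) :=
    mul_nonneg (by positivity) (mul_nonneg (by linarith) (by linarith))
  linarith

theorem step_cover (𝒜 : Finset (Submodule K V)) (X B : Submodule K V) (t : ℕ) (c : ℝ) (hc0 : 0 ≤ c)
    (hA : ∀ A ∈ 𝒜, X ≤ A → t ≤ finrank K ↥(A ⊓ B)) (hX : finrank K ↥(X ⊓ B) < t)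
    (hB : t ≤ finrank K B)
    (hc : ∀ v ∈ B, v ∉ X → ((𝒜.filter (fun A => X ⊔ Submodule.span K {v} ≤ A)).card : ℝ) ≤ c) :
    ((𝒜.filter (fun A => X ≤ A)).card : ℝ) ≤ gg (Fintype.card K) (finrank K B + 1 - t) * c := by
  have hQ := two_le_Q (K := K)
  have h := onestep 𝒜 X B t c hA hc
  rw [inf_comm B X] at h
  have h2 := num_step hQ hX hB
  have h3 := pow_lt_pow_right₀ (by linarith : (1:ℝ) < (Fintype.card K : ℝ)) hX
  refine le_of_mul_le_mul_right (h.trans ?_) (sub_pos.2 h3)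
  calc _ ≤ _ := mul_le_mul_of_nonneg_right h2 hc0
    _ = _ := by ring

theorem chain {f : V →ₗ[K] V →ₗ[K] K} (halt : ∀ x, f x x = 0)
    (hnd : ∀ x, (∀ y, f x y = 0) → x = 0) {ν : ℕ} (hV : finrank K V = 2 * ν)
    {a b t s : ℕ} (ha : a ≤ ν) (hb : t ≤ b) (𝒜 ℬ : Finset (Submodule K V)) (h𝒜 : 𝒜 ⊆ fam f a)
    (hℬ : ℬ ⊆ fam f b) (hcross : ∀ A ∈ 𝒜, ∀ B ∈ ℬ, t ≤ finrank K ↥(A ⊓ B))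
    (hs : ∀ X : Submodule K V, TotallyIsotropic f X → finrank K X < s →
      ∃ B ∈ ℬ, finrank K ↥(X ⊓ B) < t) (n : ℕ) : ∀ X : Submodule K V, finrank K X + n = s →
    ((𝒜.filter (fun A => X ≤ A)).card : ℝ) ≤
      gg (Fintype.card K) (b + 1 - t) ^ n * NN (Fintype.card K) ν s a := by
  have hQ := two_le_Q (K := K)
  induction n with
  | zero =>
    intro X hX
    have := count_le halt hnd hV ha 𝒜 h𝒜 X
    rw [show finrank K X = s by omega] at this
    simpa using this
  | succ n ih =>
    intro X hX
    have hpos : 0 ≤ gg (Fintype.card K : ℝ) (b + 1 - t) ^ n * NN (Fintype.card K) ν s a :=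
      mul_nonneg (pow_nonneg (gg_nonneg hQ _) _) (NN_nonneg hQ _ _ _)
    by_cases hTI : TotallyIsotropic f X
    · obtain ⟨B, hB, hB2⟩ := hs X hTI (by omega)
      have hBd := (mem_fam.1 (hℬ hB)).2
      have := step_cover 𝒜 X B t _ hpos (fun A hA _ => hcross A hA B hB) hB2 (by omega)
        (fun v _ hv => ih _ (by rw [finrank_sup_span X v hv]; omega))
      rw [hBd] at this
      rw [pow_succ]
      linarith
    · have : 𝒜.filter (fun A => X ≤ A) = ∅ := by
        rw [Finset.filter_eq_empty_iff]
        intro A hA hXA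
        exact hTI (TI_mono hXA (mem_fam.1 (h𝒜 hA)).1)
      rw [this, pow_succ]
      have := mul_nonneg hpos (gg_nonneg hQ (b + 1 - t))
      simp only [Finset.card_empty, Nat.cast_zero]
      linarith

theorem coverbound (𝒜 : Finset (Submodule K V)) (S : Submodule K V) (t : ℕ) (c : ℝ)
    (hS : t ≤ finrank K S)
    (hA : ∀ A ∈ 𝒜, t ≤ finrank K ↥(A ⊓ S))
    (hc : ∀ T : Submodule K V, T ≤ S → finrank K T = t →
      ((𝒜.filter (fun A => T ≤ A)).card : ℝ) ≤ c) :
    (𝒜.card : ℝ) ≤ gb (Fintype.card K) (finrank K S) t * c := by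
  have hQ := two_le_Q (K := K)
  set Q : ℝ := (Fintype.card K : ℝ) with hQdef
  have key : ∀ i : ℕ, ∀ Y : Submodule K V, Y ≤ S → finrank K Y + i = t →
      ((𝒜.filter (fun A => Y ≤ A)).card : ℝ) * ∏ j ∈ Finset.Ico (finrank K Y) t, (Q ^ t - Q ^ j)
      ≤ (∏ j ∈ Finset.Ico (finrank K Y) t, (Q ^ (finrank K S) - Q ^ j)) * c := by
    intro i
    induction i with
    | zero =>
      intro Y hY hYt
      have : finrank K Y = t := by omega
      rw [this]
      simpa using hc Y hY this
    | succ i ih =>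
      intro Y hY hYt
      have hlt : finrank K Y < t := by omega
      have hlo : ∀ j ∈ Finset.Ico (finrank K Y + 1) t, 0 < (Q ^ t - Q ^ j) := by
        intro j hj
        rw [Finset.mem_Ico] at hj
        have := pow_lt_pow_right₀ (by linarith : (1:ℝ) < Q) hj.2
        linarith
      have hlop := Finset.prod_pos hlo
      have h := onestep 𝒜 Y S t
        ((∏ j ∈ Finset.Ico (finrank K Y + 1) t, (Q ^ (finrank K S) - Q ^ j)) * c /
          ∏ j ∈ Finset.Ico (finrank K Y + 1) t, (Q ^ t - Q ^ j)) (fun A hA' _ => hA A hA') ?_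
      · rw [inf_eq_right.2 hY] at h
        rw [Finset.prod_eq_prod_Ico_succ_bot hlt, Finset.prod_eq_prod_Ico_succ_bot hlt]
        rw [← mul_div_assoc, le_div_iff₀ hlop] at h
        linarith
      · intro v hv hvY
        rw [le_div_iff₀ hlop]
        have := ih (Y ⊔ Submodule.span K {v}) (sup_span_le.2 ⟨hY, hv⟩)
          (by rw [finrank_sup_span Y v hvY]; omega)
        rwa [finrank_sup_span Y v hvY] at this
  have h := key t ⊥ bot_le (by simp)
  simp only [finrank_bot, bot_le, Finset.filter_true, Nat.Ico_zero_eq_range] at h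
  unfold gb
  rw [div_mul_eq_mul_div, le_div_iff₀ (PP_pos hQ le_rfl)]
  exact h

theorem dcXw (𝒜 : Finset (Submodule K V)) (X W : Submodule K V) (w : Submodule K V → ℝ) :
    ∑ A ∈ 𝒜.filter (fun A => X ≤ A), ((Fintype.card K : ℝ) ^ finrank K ↥(A ⊓ W) -
        (Fintype.card K : ℝ) ^ finrank K ↥(W ⊓ X)) * w A
      = ∑ v ∈ univ.filter (fun v : V => v ∈ W ∧ v ∉ X),
        ∑ A ∈ 𝒜.filter (fun A => X ⊔ Submodule.span K {v} ≤ A), w A := by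
  have h := Finset.sum_comm' (s := 𝒜.filter (fun A => X ≤ A))
    (t := fun A => univ.filter (fun v : V => v ∈ A ⊓ W ∧ v ∉ X))
    (t' := univ.filter (fun v : V => v ∈ W ∧ v ∉ X))
    (s' := fun v => 𝒜.filter (fun A => X ⊔ Submodule.span K {v} ≤ A))
    (f := fun A _ => w A) (by
      intro A v
      simp only [Finset.mem_filter, Finset.mem_univ, true_and, sup_span_le, Submodule.mem_inf]
      tauto)
  rw [← h]
  refine Finset.sum_congr rfl fun A hA => ?_
  have hXA := (Finset.mem_filter.1 hA).2
  have e : A ⊓ W ⊓ X = W ⊓ X := by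
    rw [inf_assoc]; exact inf_eq_right.2 (inf_le_right.trans hXA)
  rw [Finset.sum_const, nsmul_eq_mul, card_diff, e]

theorem pc {f : V →ₗ[K] V →ₗ[K] K} (halt : ∀ x, f x x = 0)
    (hnd : ∀ x, (∀ y, f x y = 0) → x = 0) {ν : ℕ} (hV : finrank K V = 2 * ν)
    {m : ℕ} (hm : m ≤ ν) (X M : Submodule K V) (hM : TotallyIsotropic f M) (hXM : X ≤ M) :
    ∑ A ∈ (fam f m).filter (fun A => X ≤ A), ((Fintype.card K : ℝ) ^ finrank K ↥(A ⊓ M) -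
        (Fintype.card K : ℝ) ^ finrank K X)
    = ((Fintype.card K : ℝ) ^ finrank K M - (Fintype.card K : ℝ) ^ finrank K X) *
      NN (Fintype.card K) ν (finrank K X + 1) m := by
  have h := dcX (fam f m) X M
  rw [inf_eq_right.2 hXM] at h
  have h2 : ∀ v ∈ univ.filter (fun v : V => v ∈ M ∧ v ∉ X),
        (((fam f m).filter (fun A => X ⊔ Submodule.span K {v} ≤ A)).card : ℝ)
        = NN (Fintype.card K) ν (finrank K X + 1) m := by
    intro v hv
    obtain ⟨_, hv1, hv2⟩ := Finset.mem_filter.1 hv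
    rw [count' halt hnd hV hm _ (TI_mono (sup_span_le.2 ⟨hXM, hv1⟩) hM), finrank_sup_span X v hv2]
  rw [h, Finset.sum_congr rfl h2, Finset.sum_const, nsmul_eq_mul, card_diff, inf_eq_right.2 hXM]

theorem pc2 {f : V →ₗ[K] V →ₗ[K] K} (halt : ∀ x, f x x = 0)
    (hnd : ∀ x, (∀ y, f x y = 0) → x = 0) {ν : ℕ} (hV : finrank K V = 2 * ν)
    {m : ℕ} (hm : m ≤ ν) (X M : Submodule K V) (hM : TotallyIsotropic f M) (hXM : X ≤ M) :
    ∑ A ∈ (fam f m).filter (fun A => X ≤ A), ((Fintype.card K : ℝ) ^ finrank K ↥(A ⊓ M) -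
        (Fintype.card K : ℝ) ^ finrank K X) * ((Fintype.card K : ℝ) ^ finrank K ↥(A ⊓ M) -
        (Fintype.card K : ℝ) ^ (finrank K X + 1))
    = ((Fintype.card K : ℝ) ^ finrank K M - (Fintype.card K : ℝ) ^ finrank K X) *
      (((Fintype.card K : ℝ) ^ finrank K M - (Fintype.card K : ℝ) ^ (finrank K X + 1)) *
      NN (Fintype.card K) ν (finrank K X + 2) m) := by
  have h := dcXw (fam f m) X M (fun A => (Fintype.card K : ℝ) ^ finrank K ↥(A ⊓ M) -
        (Fintype.card K : ℝ) ^ (finrank K X + 1))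
  rw [inf_eq_right.2 hXM] at h
  have h2 : ∀ v ∈ univ.filter (fun v : V => v ∈ M ∧ v ∉ X),
      ∑ A ∈ (fam f m).filter (fun A => X ⊔ Submodule.span K {v} ≤ A),
        ((Fintype.card K : ℝ) ^ finrank K ↥(A ⊓ M) - (Fintype.card K : ℝ) ^ (finrank K X + 1))
        = (((Fintype.card K : ℝ) ^ finrank K M - (Fintype.card K : ℝ) ^ (finrank K X + 1)) *
      NN (Fintype.card K) ν (finrank K X + 2) m) := by
    intro v hv
    obtain ⟨_, hv1, hv2⟩ := Finset.mem_filter.1 hv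
    have := pc halt hnd hV hm (X ⊔ Submodule.span K {v}) M hM (sup_span_le.2 ⟨hXM, hv1⟩)
    rwa [finrank_sup_span X v hv2] at this
  rw [h, Finset.sum_congr rfl h2, Finset.sum_const, nsmul_eq_mul, card_diff, inf_eq_right.2 hXM]

theorem c1_lower {f : V →ₗ[K] V →ₗ[K] K} (halt : ∀ x, f x x = 0)
    (hnd : ∀ x, (∀ y, f x y = 0) → x = 0) {ν : ℕ} (hV : finrank K V = 2 * ν)
    {m n t : ℕ} (hm : m ≤ ν) (T M : Submodule K V) (hM : TotallyIsotropic f M) (hTM : T ≤ M)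
    (hT : finrank K T = t) (hMd : finrank K M = t + (n + 1)) :
    gg (Fintype.card K) (n+1) * (NN (Fintype.card K) ν (t+1) m -
      (Fintype.card K : ℝ) * gg (Fintype.card K) n / ((Fintype.card K : ℝ) + 1) *
        NN (Fintype.card K) ν (t+2) m) ≤
    (((fam f m).filter (fun F => T ≤ F ∧ t + 1 ≤ finrank K ↥(F ⊓ M))).card : ℝ) := by
  have hQ := two_le_Q (K := K)
  have h1 := pc halt hnd hV hm T M hM hTM
  have h2 := pc2 halt hnd hV hm T M hM hTM
  rw [hT, hMd] at h1 h2
  set Q : ℝ := (Fintype.card K : ℝ) with hQdef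
  have hd : 0 < Q ^ (t+2) - Q ^ t := by
    have := pow_lt_pow_right₀ (by linarith : (1:ℝ) < Q) (show t < t + 2 by omega)
    linarith
  have h3 : ∑ A ∈ (fam f m).filter (fun A => T ≤ A), (Q ^ finrank K ↥(A ⊓ M) - Q ^ t) ≤
      ∑ A ∈ (fam f m).filter (fun A => T ≤ A),
        ((if t + 1 ≤ finrank K ↥(A ⊓ M) then (Q ^ (t+1) - Q ^ t) else 0) +
        (Q ^ finrank K ↥(A ⊓ M) - Q ^ t) * (Q ^ finrank K ↥(A ⊓ M) - Q ^ (t+1)) / (Q ^ (t+2) - Q ^ t)) := by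
    refine Finset.sum_le_sum fun A hA => ?_
    have hTA := (Finset.mem_filter.1 hA).2
    have hd1 : t ≤ finrank K ↥(A ⊓ M) := by
      rw [← hT]; exact Submodule.finrank_mono (le_inf hTA hTM)
    generalize finrank K ↥(A ⊓ M) = d at hd1 ⊢
    rcases Nat.eq_or_lt_of_le hd1 with h | h
    · subst h; simp
    · rw [if_pos (by omega)]
      rcases Nat.eq_or_lt_of_le (Nat.succ_le_of_lt h) with h' | h'
      · subst h'; simp
      · have e1 : Q ^ (t+2) ≤ Q ^ d := pow_le_pow_right₀ (by linarith) (by omega)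
        have e2 : Q ^ (t+1) ≤ Q ^ (t+2) := pow_le_pow_right₀ (by linarith) (by omega)
        have : Q ^ d - Q ^ (t+1) ≤ (Q ^ d - Q ^ t) * (Q ^ d - Q ^ (t+1)) / (Q ^ (t+2) - Q ^ t) := by
          rw [le_div_iff₀ hd, mul_comm]
          exact mul_le_mul_of_nonneg_right (by linarith) (by linarith)
        linarith
  rw [Finset.sum_add_distrib, ← Finset.sum_div, h1, h2, ← Finset.sum_filter, Finset.filter_filter,
    Finset.sum_const, nsmul_eq_mul] at h3
  generalize ((((fam f m).filter (fun F => T ≤ F ∧ t + 1 ≤ finrank K ↥(F ⊓ M))).card : ℝ)) = c at h3 ⊢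
  have hq : 0 < Q ^ t := by positivity
  have hn1 := gg_mul hQ (n+1)
  have hn := gg_mul hQ n
  have e1 : Q ^ (t + (n+1)) - Q ^ t = Q ^ t * (gg Q (n+1) * (Q - 1)) := by rw [hn1]; ring
  have e2 : Q ^ (t + (n+1)) - Q ^ (t+1) = Q ^ t * Q * (gg Q n * (Q - 1)) := by rw [hn]; ring
  have e3 : Q ^ (t+1) - Q ^ t = Q ^ t * (Q - 1) := by ring
  have e4 : Q ^ (t+2) - Q ^ t = Q ^ t * ((Q - 1) * (Q + 1)) := by ring
  rw [e1, e2, e3, e4] at h3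
  have hq1 : 0 < Q - 1 := by linarith
  have hq2 : 0 < Q + 1 := by linarith
  refine le_of_mul_le_mul_right ?_ (show 0 < Q ^ t * (Q - 1) by positivity)
  have e5 : Q ^ t * (gg Q (n + 1) * (Q - 1)) * (Q ^ t * Q * (gg Q n * (Q - 1)) * NN Q ν (t + 2) m) /
      (Q ^ t * ((Q - 1) * (Q + 1))) = gg Q (n+1) * (Q * gg Q n / (Q+1) * NN Q ν (t+2) m) * (Q ^ t * (Q - 1)) := by
    field_simp
  rw [e5] at h3
  linarith

theorem contains_T {f : V →ₗ[K] V →ₗ[K] K} (halt : ∀ x, f x x = 0)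
    (hnd : ∀ x, (∀ y, f x y = 0) → x = 0) {ν : ℕ} (hV : finrank K V = 2 * ν)
    {b t : ℕ} (hb : b ≤ ν) (htb : t + 1 ≤ b) (hbig : 2 + t + b ≤ 2 * ν)
    (T S : Submodule K V) (hT : TotallyIsotropic f T) (hTd : finrank K T = t)
    (hSd : finrank K S = t + 1)
    (hcov : ∀ B ∈ fam f b, T ≤ B → t ≤ finrank K ↥(B ⊓ S)) : T ≤ S := by
  by_contra hTS
  have hQ := two_le_Q (K := K)
  have hlt : finrank K ↥(T ⊓ S) < t := by
    rw [← hTd]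
    exact Submodule.finrank_lt_finrank_of_lt (inf_lt_left.2 hTS)
  have h := step_cover (fam f b) T S t (NN (Fintype.card K) ν (t+1) b) (NN_nonneg hQ _ _ _)
    hcov hlt (by omega) (fun v _ hv => by
      have := count_le halt hnd hV hb (fam f b) (Finset.Subset.refl _) (T ⊔ Submodule.span K {v})
      rwa [finrank_sup_span T v hv, hTd] at this)
  rw [count' halt hnd hV hb T hT, hTd, hSd, show t + 1 + 1 - t = 1 + 1 by omega, gg_succ hQ, gg_one hQ] at h
  have h2 := NN_decay hQ (ν := ν) (a := t) (m := b) (e := 2) hb hbig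
  have h3 := NN_pos hQ (ν := ν) htb hb
  have h5 : (Fintype.card K : ℝ) * 1 + 1 < (Fintype.card K : ℝ) ^ 2 := by nlinarith
  have h6 := mul_lt_mul_of_pos_right h5 h3
  linarith

/-- the intersection of all t.i. b-spaces through T is T -/
theorem inter_T {f : V →ₗ[K] V →ₗ[K] K} (halt : ∀ x, f x x = 0)
    (hnd : ∀ x, (∀ y, f x y = 0) → x = 0) {ν : ℕ} (hV : finrank K V = 2 * ν)
    {b : ℕ} (hb : b ≤ ν) (T T' : Submodule K V) (hT : TotallyIsotropic f T)
    (htb : finrank K T + 1 ≤ b) (hbig : 2 + finrank K T + b ≤ 2 * ν)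
    (h : ∀ B ∈ fam f b, T ≤ B → T' ≤ B) : T' ≤ T := by
  have hQ := two_le_Q (K := K)
  intro v hv
  by_contra hvT
  have h1 := count' halt hnd hV hb T hT
  have h2 := count_le halt hnd hV hb (fam f b) (Finset.Subset.refl _) (T ⊔ Submodule.span K {v})
  rw [finrank_sup_span T v hvT] at h2
  have e : (fam f b).filter (fun A => T ⊔ Submodule.span K {v} ≤ A) = (fam f b).filter (fun A => T ≤ A) := by
    refine Finset.filter_congr fun B hB => ?_
    rw [sup_span_le]
    exact ⟨fun h => h.1, fun hTB => ⟨hTB, h B hB hTB hv⟩⟩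
  rw [e, h1] at h2
  have h3 := NN_decay hQ (ν := ν) (a := finrank K T) (m := b) (e := 2) hb hbig
  have h4 := NN_pos hQ (ν := ν) htb hb
  have h5 : (1:ℝ) < (Fintype.card K : ℝ) ^ 2 := by nlinarith
  have h6 := mul_lt_mul_of_pos_right h5 h4
  linarith

theorem star {f : V →ₗ[K] V →ₗ[K] K} (halt : ∀ x, f x x = 0)
    (hnd : ∀ x, (∀ y, f x y = 0) → x = 0) {ν : ℕ} (hV : finrank K V = 2 * ν)
    {a b t : ℕ} (ha : a ≤ ν) (hb : b ≤ ν) (htb : t + 1 ≤ b) (hbig : 2 + t + b ≤ 2 * ν)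
    (𝒜 ℬ : Finset (Submodule K V)) (h𝒜 : 𝒜 ⊆ fam f a)
    (hℬ : ℬ ⊆ fam f b) (hcross : ∀ A ∈ 𝒜, ∀ B ∈ ℬ, t ≤ finrank K ↥(A ⊓ B))
    (T : Submodule K V) (hT : TotallyIsotropic f T) (hTd : finrank K T = t)
    (hTA : ∀ A ∈ 𝒜, T ≤ A) (hfull : ∀ B ∈ fam f b, T ≤ B → B ∈ ℬ)
    (B₀ : Submodule K V) (hB₀ : B₀ ∈ ℬ) (hTB₀ : ¬ T ≤ B₀)
    (S₀ : Submodule K V) (hS₀ : TotallyIsotropic f S₀) (hS₀d : finrank K S₀ = t + 1)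
    (hS₀c : ∀ B ∈ ℬ, t ≤ finrank K ↥(S₀ ⊓ B)) :
    ∃ (k : ℕ) (M : Submodule K V), T ≤ M ∧ finrank K M = t + k ∧ 1 ≤ k ∧ k ≤ b + 1 - t ∧
      ((𝒜.card : ℝ) ≤ gg (Fintype.card K) k * NN (Fintype.card K) ν (t+1) a +
        (gg (Fintype.card K) (b + 1 - t) - gg (Fintype.card K) k) *
          (gg (Fintype.card K) (b + 1 - t) * NN (Fintype.card K) ν (t+2) a)) ∧
      (k = 1 → ∀ B ∈ ℬ, t ≤ finrank K ↥(M ⊓ B)) ∧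
      (k = 1 → (ℬ.card : ℝ) ≤ gg (Fintype.card K) (t+1) * NN (Fintype.card K) ν t b) ∧
      (2 ≤ k → (ℬ.card : ℝ) ≤ NN (Fintype.card K) ν t b +
          gg (Fintype.card K) (t+2) * NN (Fintype.card K) ν (t+1) b) ∧
      (k = b + 1 - t → TotallyIsotropic f M ∧ (∀ A ∈ 𝒜, t + 1 ≤ finrank K ↥(A ⊓ M)) ∧
        ∀ B ∈ ℬ, T ≤ B ∨ B ≤ M) := by
  have hQ := two_le_Q (K := K)
  set 𝒮 : Set (Submodule K V) := {S | TotallyIsotropic f S ∧ finrank K S = t + 1 ∧ T ≤ S ∧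
    ∀ B ∈ ℬ, t ≤ finrank K ↥(S ⊓ B)} with h𝒮
  have hTS₀ : T ≤ S₀ := contains_T halt hnd hV hb htb hbig T S₀ hT hTd hS₀d
    (fun B hB hTB => by rw [inf_comm]; exact hS₀c B (hfull B hB hTB))
  have hS₀m : S₀ ∈ 𝒮 := ⟨hS₀, hS₀d, hTS₀, hS₀c⟩
  -- geometry of B not containing T
  have geo0 : ∀ X : Submodule K V, ∀ B ∈ ℬ, ¬ T ≤ B → t ≤ finrank K ↥(X ⊓ B) → T < T ⊔ (X ⊓ B) := by
    intro X B hB hTB h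
    refine lt_of_le_of_ne le_sup_left fun he => hTB ?_
    have h1 : X ⊓ B ≤ T := by rw [he]; exact le_sup_right
    have h2 : X ⊓ B = T := Submodule.eq_of_le_of_finrank_le h1 (by omega)
    rw [← h2]; exact inf_le_right
  have geo1 : ∀ B ∈ ℬ, ¬ T ≤ B → ∀ S ∈ 𝒮, S ≤ T ⊔ B := by
    intro B hB hTB S hS
    obtain ⟨_, hSd, hTS, hSc⟩ := hS
    have h1 := geo0 S B hB hTB (hSc B hB)
    have h2 := Submodule.finrank_lt_finrank_of_lt h1
    have h3 : T ⊔ S ⊓ B ≤ S := sup_le hTS inf_le_left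
    have h4 := Submodule.eq_of_le_of_finrank_le h3 (by omega)
    rw [← h4]
    exact sup_le_sup_left inf_le_right T
  have geo2 : ∀ B ∈ ℬ, ¬ T ≤ B → finrank K ↥(T ⊔ B) = b + 1 := by
    intro B hB hTB
    have hBd := (mem_fam.1 (hℬ hB)).2
    have h1 := Submodule.finrank_sup_add_finrank_inf_eq T B
    have hlt : finrank K ↥(T ⊓ B) < finrank K T :=
      Submodule.finrank_lt_finrank_of_lt (inf_lt_left.2 hTB)
    have h2 := Submodule.finrank_sup_add_finrank_inf_eq S₀ B
    have h3 := hS₀c B hB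
    have h4 : S₀ ⊔ B ≤ T ⊔ B := sup_le (geo1 B hB hTB S₀ hS₀m) le_sup_right
    have h5 := Submodule.finrank_sup_add_finrank_inf_eq T (S₀ ⊓ B)
    have h6 : finrank K ↥(T ⊔ S₀ ⊓ B) ≤ t + 1 := by
      rw [← hS₀d]; exact Submodule.finrank_mono (sup_le hTS₀ inf_le_left)
    have h7 : finrank K ↥(T ⊓ (S₀ ⊓ B)) ≤ finrank K ↥(T ⊓ B) :=
      Submodule.finrank_mono (inf_le_inf_left T inf_le_right)
    omega
  set M : Submodule K V := sSup 𝒮 with hM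
  have hMle : ∀ B ∈ ℬ, ¬ T ≤ B → M ≤ T ⊔ B := fun B hB hTB => sSup_le (geo1 B hB hTB)
  have hS₀M : S₀ ≤ M := le_sSup hS₀m
  have hTM : T ≤ M := hTS₀.trans hS₀M
  obtain ⟨k, hk⟩ : ∃ k, finrank K M = t + k :=
    Nat.exists_eq_add_of_le (by rw [← hTd]; exact Submodule.finrank_mono hTM)
  have hk1 : 1 ≤ k := by
    have := Submodule.finrank_mono hS₀M
    omega
  have hk2 : k ≤ b + 1 - t := by
    have h1 := Submodule.finrank_mono (hMle B₀ hB₀ hTB₀)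
    have h2 := geo2 B₀ hB₀ hTB₀
    omega
  have hAM : ∀ A ∈ 𝒜, ∀ B ∈ ℬ, ¬ T ≤ B → t + 1 ≤ finrank K ↥(A ⊓ (T ⊔ B)) := by
    intro A hA B hB hTB
    have h1 := Submodule.finrank_lt_finrank_of_lt (geo0 A B hB hTB (hcross A hA B hB))
    have h2 : T ⊔ A ⊓ B ≤ A ⊓ (T ⊔ B) :=
      le_inf (sup_le (hTA A hA) inf_le_left) (sup_le_sup_left inf_le_right T)
    have h3 := Submodule.finrank_mono h2
    omega
  have hMcov : k = 1 → ∀ B ∈ ℬ, t ≤ finrank K ↥(M ⊓ B) := by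
    intro hk1 B hB
    have : S₀ = M := Submodule.eq_of_le_of_finrank_le hS₀M (by omega)
    rw [← this]; exact hS₀c B hB
  refine ⟨k, M, hTM, hk, hk1, hk2, ?_, hMcov, ?_, ?_, ?_⟩
  · -- bound on 𝒜
    set W := T ⊔ B₀ with hW
    have hWd := geo2 B₀ hB₀ hTB₀
    have hTW : T ≤ W := le_sup_left
    have h := dcX 𝒜 T W
    have e0 : 𝒜.filter (fun A => T ≤ A) = 𝒜 := Finset.filter_true_of_mem hTA
    rw [inf_eq_right.2 hTW, e0, hTd] at h
    set Q : ℝ := (Fintype.card K : ℝ) with hQdef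
    set c1 := NN Q ν (t+1) a with hc1
    set c2 := gg Q (b + 1 - t) * NN Q ν (t+2) a with hc2
    have hc2n : 0 ≤ c2 := mul_nonneg (gg_nonneg hQ _) (NN_nonneg hQ _ _ _)
    have hlow : (𝒜.card : ℝ) * (Q ^ (t+1) - Q ^ t) ≤
        ∑ A ∈ 𝒜, (Q ^ finrank K ↥(A ⊓ W) - Q ^ t) := by
      rw [← nsmul_eq_mul, ← Finset.sum_const]
      refine Finset.sum_le_sum fun A hA => ?_
      have := pow_le_pow_right₀ (by linarith : (1:ℝ) ≤ Q) (hAM A hA B₀ hB₀ hTB₀)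
      linarith
    have hup : ∑ v ∈ univ.filter (fun v : V => v ∈ W ∧ v ∉ T),
        ((𝒜.filter (fun A => T ⊔ Submodule.span K {v} ≤ A)).card : ℝ) ≤
        ∑ v ∈ univ.filter (fun v : V => v ∈ W ∧ v ∉ T), (c2 + if v ∈ M then c1 - c2 else 0) := by
      refine Finset.sum_le_sum fun v hv => ?_
      obtain ⟨_, hvW, hvT⟩ := Finset.mem_filter.1 hv
      have hd := finrank_sup_span T v hvT
      split_ifs with hvM
      · have := count_le halt hnd hV ha 𝒜 h𝒜 (T ⊔ Submodule.span K {v})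
        rw [hd, hTd] at this
        linarith
      · rw [add_zero]
        by_cases hTI : TotallyIsotropic f (T ⊔ Submodule.span K {v})
        · have : ∃ B ∈ ℬ, finrank K ↥((T ⊔ Submodule.span K {v}) ⊓ B) < t := by
            by_contra hcon
            push Not at hcon
            refine hvM ?_
            have : T ⊔ Submodule.span K {v} ≤ M :=
              le_sSup ⟨hTI, by rw [hd, hTd], le_sup_left, hcon⟩
            exact (sup_span_le.1 this).2
          obtain ⟨B, hB, hBlt⟩ := this
          have hBd := (mem_fam.1 (hℬ hB)).2
          have := step_cover 𝒜 (T ⊔ Submodule.span K {v}) B t (NN Q ν (t+2) a) (NN_nonneg hQ _ _ _)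
            (fun A hA _ => hcross A hA B hB) hBlt (by omega) (fun w _ hw => by
              have := count_le halt hnd hV ha 𝒜 h𝒜 (T ⊔ Submodule.span K {v} ⊔ Submodule.span K {w})
              rwa [finrank_sup_span _ w hw, hd, hTd] at this)
          rwa [hBd] at this
        · have : 𝒜.filter (fun A => T ⊔ Submodule.span K {v} ≤ A) = ∅ := by
            rw [Finset.filter_eq_empty_iff]
            intro A hA hXA
            exact hTI (TI_mono hXA (mem_fam.1 (h𝒜 hA)).1)
          rw [this]
          simpa using hc2n
    rw [Finset.sum_add_distrib, Finset.sum_const, ← Finset.sum_filter, Finset.filter_filter,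
      Finset.sum_const, nsmul_eq_mul, nsmul_eq_mul, card_diff, inf_eq_right.2 hTW, hWd, hTd] at hup
    have e1 : univ.filter (fun v : V => (v ∈ W ∧ v ∉ T) ∧ v ∈ M) =
        univ.filter (fun v : V => v ∈ M ∧ v ∉ T) := by
      refine Finset.filter_congr fun v _ => ?_
      have := hMle B₀ hB₀ hTB₀
      exact ⟨fun h => ⟨h.2, h.1.2⟩, fun h => ⟨⟨this h.1, h.2⟩, h.1⟩⟩
    rw [e1, card_diff, inf_eq_right.2 hTM, hTd, hk] at hup
    have hfin := (hlow.trans_eq h).trans hup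
    have g1 := gg_mul hQ (b + 1 - t)
    have g2 := gg_mul hQ k
    have e2 : Q ^ (b+1) - Q ^ t = Q ^ t * (gg Q (b + 1 - t) * (Q - 1)) := by
      rw [g1, mul_sub, ← pow_add, mul_one, show t + (b + 1 - t) = b + 1 by omega]
    have e3 : Q ^ (t+k) - Q ^ t = Q ^ t * (gg Q k * (Q - 1)) := by rw [g2]; ring
    have e4 : Q ^ (t+1) - Q ^ t = Q ^ t * (Q - 1) := by ring
    change (𝒜.card : ℝ) * (Q ^ (t+1) - Q ^ t) ≤ (Q ^ (b+1) - Q ^ t) * c2 + (Q ^ (t+k) - Q ^ t) * (c1 - c2) at hfin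
    rw [e2, e3, e4] at hfin
    have hp : 0 < Q ^ t * (Q - 1) := mul_pos (by positivity) (by linarith)
    refine le_of_mul_le_mul_right ?_ hp
    linarith
  · intro hk1
    have := coverbound ℬ M t (NN (Fintype.card K) ν t b) (by omega)
      (fun B hB => by rw [inf_comm]; exact hMcov hk1 B hB)
      (fun T' _ hT'd => by
        have := count_le halt hnd hV hb ℬ hℬ T'
        rwa [hT'd] at this)
    rwa [hk, hk1, gb_succ_self hQ] at this
  · intro hk2
    obtain ⟨S', hS'M, hS'd⟩ := exists_sub_finrank M (t+2) (by omega)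
    have h1 := coverbound (ℬ.filter (fun B => ¬ T ≤ B)) S' (t+1) (NN (Fintype.card K) ν (t+1) b)
      (by omega) (fun B hB => by
        obtain ⟨hB1, hB2⟩ := Finset.mem_filter.1 hB
        have hBd := (mem_fam.1 (hℬ hB1)).2
        have e1 := geo2 B hB1 hB2
        have e2 : finrank K ↥(B ⊔ S') ≤ finrank K ↥(T ⊔ B) :=
          Submodule.finrank_mono (sup_le le_sup_right (hS'M.trans (hMle B hB1 hB2)))
        have e3 := Submodule.finrank_sup_add_finrank_inf_eq B S'
        omega)
      (fun T' _ hT'd => by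
        have := count_le halt hnd hV hb (ℬ.filter (fun B => ¬ T ≤ B))
          ((Finset.filter_subset _ _).trans hℬ) T'
        rwa [hT'd] at this)
    rw [hS'd, show t + 2 = (t+1) + 1 by ring, gb_succ_self hQ] at h1
    have h2 := count_le halt hnd hV hb ℬ hℬ T
    rw [hTd] at h2
    have h3 := Finset.card_filter_add_card_filter_not (s := ℬ) (fun B => T ≤ B)
    have h4 : (ℬ.card : ℝ) = ((ℬ.filter (fun B => T ≤ B)).card : ℝ) + ((ℬ.filter (fun B => ¬ T ≤ B)).card : ℝ) := by
      exact_mod_cast h3.symm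
    rw [h4]
    exact add_le_add h2 h1
  · intro hkk
    have hMe : ∀ B ∈ ℬ, ¬ T ≤ B → M = T ⊔ B := fun B hB hTB =>
      Submodule.eq_of_le_of_finrank_le (hMle B hB hTB) (by rw [geo2 B hB hTB]; omega)
    refine ⟨?_, ?_, ?_⟩
    · rw [hMe B₀ hB₀ hTB₀]
      refine TI_sup halt hT (mem_fam.1 (hℬ hB₀)).1 ?_
      intro x hx y hy
      have : M ≤ LinearMap.ker (f x) := by
        refine sSup_le fun S hS => ?_
        intro z hz
        exact hS.1 x (hS.2.2.1 hx) z hz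
      have hyM : y ∈ M := by
        rw [hMe B₀ hB₀ hTB₀]; exact Submodule.mem_sup_right hy
      exact this hyM
    · intro A hA
      rw [hMe B₀ hB₀ hTB₀]
      exact hAM A hA B₀ hB₀ hTB₀
    · intro B hB
      by_cases hTB : T ≤ B
      · exact Or.inl hTB
      · right
        rw [hMe B hB hTB]; exact le_sup_right

theorem pow_ge {Q : ℝ} (hQ : 2 ≤ Q) {n m : ℕ} (h : m ≤ n) : (2:ℝ) ^ m ≤ Q ^ n :=
  (pow_le_pow_left₀ (by norm_num) hQ m).trans (pow_le_pow_right₀ (by linarith) h)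

/-- error term in the lower bound for C1 -/
theorem num1 {Q : ℝ} (hQ : 2 ≤ Q) {ν m₁ m₂ t n : ℕ} (hm₁ : m₁ ≤ ν) (hn : m₂ = t + (n + 1))
    (hdim : 2 * m₁ + m₂ + t + 3 ≤ 2 * ν) :
    (Q * gg Q (n+1) / (Q + 1) * NN Q ν (t+2) m₁) * Q ^ (m₁ + t + 2) ≤ NN Q ν (t+1) m₁ := by
  have h1 := NN_decay hQ (ν := ν) (a := t+1) (m := m₁) (e := m₁ + m₂ + 2) hm₁ (by omega)
  have h0 := NN_nonneg hQ ν (t+2) m₁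
  have h2 : Q * gg Q (n+1) / (Q + 1) ≤ Q ^ (n+1) := by
    rw [div_le_iff₀ (by linarith)]
    have := gg_le hQ n
    have hp : 0 < Q ^ n := by positivity
    have a1 := mul_le_mul_of_nonneg_left this (show 0 ≤ Q by linarith)
    have a2 := mul_le_mul_of_nonneg_left (show 2 ≤ Q + 1 by linarith) (show 0 ≤ Q ^ n * Q by positivity)
    rw [pow_succ]; linarith
  have h3 : NN Q ν (t+2) m₁ * (Q ^ (n+1) * Q ^ (m₁ + t + 2)) ≤ NN Q ν (t+1) m₁ := by
    rw [← pow_add, show (n + 1) + (m₁ + t + 2) = m₁ + m₂ + 2 by omega]; exact h1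
  have h4 := mul_le_mul_of_nonneg_right h2 (mul_nonneg h0 (show 0 ≤ Q ^ (m₁ + t + 2) by positivity))
  linarith

theorem num2 {Q : ℝ} (hQ : 2 ≤ Q) {ν m₁ m₂ t : ℕ} (h12 : m₂ < m₁) (hmt : t + 1 ≤ m₂) (hm₁ : m₁ ≤ ν) :
    4 * Q ^ (m₂ - t) * (gg Q (m₁ + 1 - t) * NN Q ν (t+1) m₂ * NN Q ν t m₁) ≤
    (4 * Q ^ (m₂ - t) - 1) * (gg Q (m₂ + 1 - t) * NN Q ν (t+1) m₁ * NN Q ν t m₂) := by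
  have r1 := NN_rec hQ ν (show t < m₁ by omega)
  have r2 := NN_rec hQ ν (show t < m₂ by omega)
  have g1 := gg_mul hQ (m₁ + 1 - t)
  have g2 := gg_mul hQ (m₂ + 1 - t)
  rw [show m₁ + 1 - t = (m₁ - t) + 1 by omega] at *
  rw [show m₂ + 1 - t = (m₂ - t) + 1 by omega] at *
  have hZ : 0 ≤ Q ^ (2 * (ν - t)) - 1 := sub_nonneg.2 (one_le_pow₀ (by linarith))
  have hx : Q ≤ Q ^ (m₂ - t) := by
    have := pow_le_pow_right₀ (by linarith : (1:ℝ) ≤ Q) (show 1 ≤ m₂ - t by omega)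
    simpa using this
  have hy : Q * Q ^ (m₂ - t) ≤ Q ^ (m₁ - t) := by
    rw [← pow_succ']; exact pow_le_pow_right₀ (by linarith) (by omega)
  rw [pow_succ] at g1 g2
  have hp := NN_nonneg hQ ν (t+1) m₁
  have hr := NN_nonneg hQ ν (t+1) m₂
  generalize Q ^ (m₁ - t) = y at *
  generalize Q ^ (m₂ - t) = x at *
  generalize Q ^ (2 * (ν - t)) - 1 = Z at *
  generalize NN Q ν (t+1) m₁ = p at *
  generalize NN Q ν (t+1) m₂ = r at *
  generalize NN Q ν t m₁ = P at *
  generalize NN Q ν t m₂ = R at *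
  generalize gg Q (m₁ - t + 1) = G1 at *
  generalize gg Q (m₂ - t + 1) = G2 at *
  have hQ1 : 0 < Q - 1 := by linarith
  have hx1 : 0 < x - 1 := by linarith
  have hy1 : 0 < y - 1 := by nlinarith
  have hZ' : 0 ≤ Z * p * r := by
    positivity
  refine le_of_mul_le_mul_right ?_ (mul_pos hQ1 (mul_pos hx1 hy1))
  have e1 : 4 * x * (G1 * r * P) * ((Q - 1) * ((x - 1) * (y - 1)))
    = 4 * x * (G1 * (Q-1)) * (x - 1) * r * (P * (y - 1)) := by ring
  have e2 : (4 * x - 1) * (G2 * p * R) * ((Q - 1) * ((x - 1) * (y - 1)))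
    = (4 * x - 1) * (G2 * (Q-1)) * (y - 1) * p * (R * (x - 1)) := by ring
  rw [e1, e2, g1, g2, r1, r2]
  have key : 4 * x * (y * Q - 1) * (x - 1) ≤ (4 * x - 1) * (x * Q - 1) * (y - 1) := by
    have k1 : (4 * x - 1) * (x * Q - 1) * (y - 1) - 4 * x * (y * Q - 1) * (x - 1)
      = 4 * x * (Q - 1) * (y - x) - (x * Q - 1) * (y - 1) := by ring
    have k2 : y ≤ 2 * (y - x) := by nlinarith
    have k3 : Q ≤ 2 * (Q - 1) := by linarith
    have k4 : Q * y ≤ 2 * (Q - 1) * (2 * (y - x)) := mul_le_mul k3 k2 (by linarith) (by linarith)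
    have k5 : x * (Q * y) ≤ x * (2 * (Q - 1) * (2 * (y - x))) := mul_le_mul_of_nonneg_left k4 (by linarith)
    have k6 : (x * Q - 1) * (y - 1) ≤ x * Q * y := by nlinarith
    nlinarith
  calc 4 * x * (y * Q - 1) * (x - 1) * r * (Z * p) = (4 * x * (y * Q - 1) * (x - 1)) * (Z * p * r) := by ring
    _ ≤ ((4 * x - 1) * (x * Q - 1) * (y - 1)) * (Z * p * r) := mul_le_mul_of_nonneg_right key hZ'
    _ = _ := by ring

theorem num2' {Q : ℝ} (hQ : 2 ≤ Q) {ν m₁ m₂ t : ℕ} (h12 : m₂ ≤ m₁) (hmt : t + 1 ≤ m₂) (hm₁ : m₁ ≤ ν) :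
    (gg Q (m₁ + 1 - t) * NN Q ν (t+1) m₂ * NN Q ν t m₁) ≤
    (gg Q (m₂ + 1 - t) * NN Q ν (t+1) m₁ * NN Q ν t m₂) := by
  rcases Nat.eq_or_lt_of_le h12 with h | h
  · subst h; exact le_rfl
  · have h1 := num2 hQ h hmt hm₁
    have h2 : 0 ≤ (gg Q (m₂ + 1 - t) * NN Q ν (t+1) m₁ * NN Q ν t m₂) :=
      mul_nonneg (mul_nonneg (gg_nonneg hQ _) (NN_nonneg hQ _ _ _)) (NN_nonneg hQ _ _ _)
    have h3 : 0 < Q ^ (m₂ - t) := by positivity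
    refine le_of_mul_le_mul_left ?_ (show 0 < 4 * Q ^ (m₂ - t) by positivity)
    linarith

def GG (Q : ℝ) (ν t a b i : ℕ) : ℝ := gb Q (t + i) t * gg Q (b + 1 - t) ^ i * NN Q ν (t + i) a

theorem GG_nonneg {Q : ℝ} (hQ : 2 ≤ Q) (ν t a b i : ℕ) : 0 ≤ GG Q ν t a b i :=
  mul_nonneg (mul_nonneg (gb_pos hQ (by omega)).le (pow_nonneg (gg_nonneg hQ _) _)) (NN_nonneg hQ _ _ _)

theorem GG_zero {Q : ℝ} (hQ : 2 ≤ Q) (ν t a b : ℕ) : GG Q ν t a b 0 = NN Q ν t a := by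
  simp [GG, gb_self hQ]

theorem GG_one {Q : ℝ} (hQ : 2 ≤ Q) (ν t a b : ℕ) :
    GG Q ν t a b 1 = gg Q (t+1) * gg Q (b + 1 - t) * NN Q ν (t+1) a := by
  simp [GG, gb_succ_self hQ]

theorem GG_step {Q : ℝ} (hQ : 2 ≤ Q) {ν t a b i e : ℕ} (ha : a ≤ ν) (htb : t ≤ b)
    (he : e + t + i + a + b ≤ 2 * ν) : GG Q ν t a b (i+1) * Q ^ e ≤ 4 * GG Q ν t a b i := by
  have h1 := gb_step hQ t i
  have h2 := gg_le hQ (b - t)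
  rw [show b - t + 1 = b + 1 - t by omega] at h2
  have h3 := NN_decay hQ (ν := ν) (a := t + i) (m := a) (e := e + b) ha (by omega)
  unfold GG
  have hgb := (gb_pos hQ (show t ≤ t + i by omega)).le
  have hgg := gg_nonneg hQ (b + 1 - t)
  have hN := NN_nonneg hQ ν (t+i+1) a
  have hbt : Q ^ t * Q ^ (b - t) = Q ^ b := by rw [← pow_add]; congr 1; omega
  have s1 : gb Q (t + i + 1) t * gg Q (b+1-t) ≤ (2 * Q ^ t * gb Q (t+i) t) * (2 * Q ^ (b - t)) :=
    mul_le_mul h1 h2 hgg (by positivity)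
  calc gb Q (t + (i+1)) t * gg Q (b+1-t) ^ (i+1) * NN Q ν (t+(i+1)) a * Q ^ e
      = (gb Q (t + i + 1) t * gg Q (b+1-t)) * (gg Q (b+1-t) ^ i * NN Q ν (t+i+1) a * Q ^ e) := by
        rw [← add_assoc]; ring
    _ ≤ ((2 * Q ^ t * gb Q (t+i) t) * (2 * Q ^ (b - t))) * (gg Q (b+1-t) ^ i * NN Q ν (t+i+1) a * Q ^ e) :=
        mul_le_mul_of_nonneg_right s1 (by positivity)
    _ = 4 * (gb Q (t+i) t * gg Q (b+1-t) ^ i) * (NN Q ν (t+i+1) a * (Q ^ e * (Q ^ t * Q ^ (b - t)))) := by ring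
    _ = 4 * (gb Q (t+i) t * gg Q (b+1-t) ^ i) * (NN Q ν (t+i+1) a * Q ^ (e + b)) := by
        rw [hbt, pow_add]
    _ ≤ 4 * (gb Q (t+i) t * gg Q (b+1-t) ^ i) * NN Q ν (t+i) a :=
        mul_le_mul_of_nonneg_left h3 (by positivity)
    _ = _ := by ring

theorem GG_mono {Q : ℝ} (hQ : 2 ≤ Q) {ν t a b m₁ i j : ℕ} (ha : a ≤ ν) (htb : t ≤ b)
    (hdim : m₁ + a + b + t + 3 ≤ 2 * ν) (hij : i ≤ j) (hj : j ≤ m₁) :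
    GG Q ν t a b j ≤ GG Q ν t a b i := by
  induction j, hij using Nat.le_induction with
  | base => exact le_rfl
  | succ n hn ih =>
    have h1 := GG_step hQ (ν := ν) (t := t) (a := a) (b := b) (i := n) (e := 2) ha htb (by omega)
    have h2 := ih (by omega)
    have h3 := GG_nonneg hQ ν t a b (n+1)
    have h4 : (4:ℝ) ≤ Q ^ 2 := by nlinarith
    nlinarith

theorem num3a {Q : ℝ} (hQ : 2 ≤ Q) {ν t a b m₁ j : ℕ} (ha : a ≤ ν) (htb : t ≤ b)
    (hdim : m₁ + a + b + t + 3 ≤ 2 * ν) (hm : t + 2 ≤ m₁) (hj2 : 2 ≤ j) (hj : j ≤ m₁) :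
    NN Q ν t b * GG Q ν t a b j ≤ (1/2) * (gg Q (b + 1 - t) * NN Q ν (t+1) a * NN Q ν t b) := by
  have h1 := GG_mono hQ ha htb hdim hj2 hj
  have h2 := GG_step hQ (ν := ν) (t := t) (a := a) (b := b) (i := 1) (e := m₁ + 2) ha htb (by omega)
  rw [GG_one hQ] at h2
  have h3 := gg_le hQ t
  have hR := NN_nonneg hQ ν t b
  have hL := mul_nonneg (gg_nonneg hQ (b + 1 - t)) (NN_nonneg hQ ν (t+1) a)
  have h4 : 16 * Q ^ t ≤ Q ^ (m₁ + 2) := by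
    obtain ⟨c, rfl⟩ := Nat.exists_eq_add_of_le hm
    have := pow_ge hQ (show 4 ≤ c + 4 by omega)
    have hp : 0 < Q ^ t := by positivity
    rw [show t + 2 + c + 2 = (c + 4) + t by ring, pow_add]
    nlinarith
  have hG := GG_nonneg hQ ν t a b 2
  have hp : 0 < Q ^ t := by positivity
  have h5 : Q ^ t * (16 * GG Q ν t a b 2) ≤ Q ^ t * (8 * (gg Q (b + 1 - t) * NN Q ν (t+1) a)) := by
    calc Q ^ t * (16 * GG Q ν t a b 2) = GG Q ν t a b 2 * (16 * Q ^ t) := by ring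
      _ ≤ GG Q ν t a b 2 * Q ^ (m₁ + 2) := mul_le_mul_of_nonneg_left h4 hG
      _ ≤ _ := h2
      _ = 4 * (gg Q (b + 1 - t) * NN Q ν (t+1) a) * gg Q (t+1) := by ring
      _ ≤ 4 * (gg Q (b + 1 - t) * NN Q ν (t+1) a) * (2 * Q ^ t) := mul_le_mul_of_nonneg_left h3 (by positivity)
      _ = _ := by ring
  have h6 := le_of_mul_le_mul_left h5 hp
  have h7 : GG Q ν t a b j ≤ (1/2) * (gg Q (b + 1 - t) * NN Q ν (t+1) a) := by linarith
  calc _ ≤ NN Q ν t b * ((1/2) * (gg Q (b + 1 - t) * NN Q ν (t+1) a)) := mul_le_mul_of_nonneg_left h7 hR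
    _ = _ := by ring

theorem num3b {Q : ℝ} (hQ : 2 ≤ Q) {ν t m₁ m₂ i j : ℕ} (h1 : m₁ ≤ ν) (h21 : m₂ ≤ m₁) (htm : t + 1 ≤ m₂)
    (hdim : 2 * m₁ + m₂ + t + 3 ≤ 2 * ν) (hi1 : 1 ≤ i) (hj1 : 1 ≤ j) (hi : i ≤ m₁) (hj : j ≤ m₁) :
    GG Q ν t m₂ m₁ i * GG Q ν t m₁ m₂ j ≤
      (1/2) * (gg Q (m₂ + 1 - t) * NN Q ν (t+1) m₁ * NN Q ν t m₂) := by
  have a1 := GG_mono hQ (ν := ν) (t := t) (a := m₂) (b := m₁) (m₁ := m₁) (by omega) (by omega) (by omega) hi1 hi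
  have a2 := GG_mono hQ (ν := ν) (t := t) (a := m₁) (b := m₂) (m₁ := m₁) (by omega) (by omega) (by omega) hj1 hj
  have h2 := GG_step hQ (ν := ν) (t := t) (a := m₂) (b := m₁) (i := 0) (e := m₁ + 3) (by omega) (by omega) (by omega)
  rw [GG_zero hQ, zero_add] at h2
  rw [GG_one hQ] at a2
  have h3 := gg_le hQ t
  have hL := mul_nonneg (gg_nonneg hQ (m₂ + 1 - t)) (NN_nonneg hQ ν (t+1) m₁)
  have h4 : 16 * Q ^ t ≤ Q ^ (m₁ + 3) := by
    obtain ⟨c, rfl⟩ := Nat.exists_eq_add_of_le (show t + 1 ≤ m₁ by omega)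
    have := pow_ge hQ (show 4 ≤ c + 4 by omega)
    have hp : 0 < Q ^ t := by positivity
    rw [show t + 1 + c + 3 = (c + 4) + t by ring, pow_add]
    nlinarith
  have g1 := GG_nonneg hQ ν t m₂ m₁ 1
  have g2 := GG_nonneg hQ ν t m₁ m₂ j
  have hR := NN_nonneg hQ ν t m₂
  have hp : 0 < Q ^ t := by positivity
  have h5 : GG Q ν t m₂ m₁ 1 * (4 * Q ^ t) ≤ NN Q ν t m₂ := by
    have := mul_le_mul_of_nonneg_left h4 g1
    linarith
  have h6 : GG Q ν t m₁ m₂ j ≤ 2 * Q ^ t * (gg Q (m₂ + 1 - t) * NN Q ν (t+1) m₁) := by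
    have := mul_le_mul_of_nonneg_right h3 hL
    linarith
  calc _ ≤ GG Q ν t m₂ m₁ 1 * (2 * Q ^ t * (gg Q (m₂ + 1 - t) * NN Q ν (t+1) m₁)) :=
        mul_le_mul a1 h6 g2 g1
    _ = (1/2) * (GG Q ν t m₂ m₁ 1 * (4 * Q ^ t)) * (gg Q (m₂ + 1 - t) * NN Q ν (t+1) m₁) := by ring
    _ ≤ (1/2) * NN Q ν t m₂ * (gg Q (m₂ + 1 - t) * NN Q ν (t+1) m₁) :=
        mul_le_mul_of_nonneg_right (by linarith) hL
    _ = _ := by ring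

theorem num4a {Q : ℝ} (hQ : 2 ≤ Q) {ν t a b m₁ : ℕ} (ha : a ≤ ν) (hb : 2 * t + 1 ≤ b) (hm3 : 3 ≤ m₁)
    (hdim : m₁ + a + b + t + 3 ≤ 2 * ν) {A B : ℝ} (hB0 : 0 ≤ B)
    (hA : A ≤ gg Q 1 * NN Q ν (t+1) a + (gg Q (b + 1 - t) - gg Q 1) *
          (gg Q (b + 1 - t) * NN Q ν (t+2) a))
    (hB : B ≤ gg Q (t+1) * NN Q ν t b) :
    A * B ≤ (3/4) * (gg Q (b + 1 - t) * NN Q ν (t+1) a * NN Q ν t b) := by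
  have hs := NN_decay hQ (ν := ν) (a := t+1) (m := a) (e := b + (m₁ + 2)) ha (by omega)
  obtain ⟨n, rfl⟩ := Nat.exists_eq_add_of_le (show t ≤ b by omega)
  rw [show t + n + 1 - t = n + 1 by omega] at *
  have hp := NN_nonneg hQ ν (t+1) a
  have hs0 := NN_nonneg hQ ν (t+2) a
  have hr := NN_nonneg hQ ν t (t+n)
  have g1 := gg_le hQ n
  have g2 := gg_le hQ t
  have g3 : 2 * gg Q (t+1) ≤ gg Q (n+1) := by
    have e1 := gg_succ hQ (t+1)
    have e2 := gg_mono hQ (show t + 1 + 1 ≤ n + 1 by omega)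
    have := gg_nonneg hQ (t+1)
    nlinarith
  have hg0 := gg_nonneg hQ (t+1)
  have hG0 := gg_nonneg hQ (n+1)
  rw [gg_one hQ] at hA
  have h32 := pow_ge hQ (show 5 ≤ m₁ + 2 by omega)
  have h5 : gg Q (t+1) * gg Q (n+1) * NN Q ν (t+2) a ≤ (1/8) * NN Q ν (t+1) a := by
    have e1 : gg Q (t+1) * gg Q (n+1) ≤ 2 * Q ^ t * (2 * Q ^ n) := mul_le_mul g2 g1 hG0 (by positivity)
    have e2 := mul_le_mul_of_nonneg_right e1 hs0
    have e3 : NN Q ν (t+2) a * Q ^ (t + n) * 32 ≤ NN Q ν (t+1) a := by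
      refine le_trans ?_ hs
      rw [pow_add _ _ (m₁+2), ← mul_assoc]
      exact mul_le_mul_of_nonneg_left (by linarith) (by positivity)
    rw [pow_add] at e3
    linarith
  generalize NN Q ν (t+1) a = p at *
  change A ≤ 1 * p + (gg Q (n+1) - 1) * (gg Q (n+1) * NN Q ν (t+2) a) at hA
  generalize NN Q ν (t+2) a = s at *
  generalize NN Q ν t (t+n) = r at *
  generalize gg Q (t+1) = g at *
  generalize gg Q (n+1) = G at *
  have hA' : A ≤ p + G * G * s := by nlinarith [mul_nonneg hG0 hs0]
  have hA0 : 0 ≤ p + G * G * s := by positivity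
  calc A * B ≤ (p + G * G * s) * (g * r) := mul_le_mul hA' hB hB0 hA0
    _ = (g * p + G * (g * G * s)) * r := by ring
    _ ≤ (3/4 * (G * p)) * r := by
        refine mul_le_mul_of_nonneg_right ?_ hr
        have e1 := mul_le_mul_of_nonneg_right g3 hp
        have e2 := mul_le_mul_of_nonneg_left h5 hG0
        have := mul_nonneg hG0 hp
        linarith
    _ = _ := by ring

theorem num4b {Q : ℝ} (hQ : 2 ≤ Q) {ν t a b m₁ k : ℕ} (ha : a ≤ ν) (hbν : b ≤ ν) (hta : t + 1 ≤ a)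
    (hm3 : 3 ≤ m₁) (hk : k ≤ b - t) (htb : t ≤ b)
    (hdim : m₁ + a + b + t + 3 ≤ 2 * ν) {A B : ℝ} (hB0 : 0 ≤ B)
    (hA : A ≤ gg Q k * NN Q ν (t+1) a + (gg Q (b + 1 - t) - gg Q k) *
          (gg Q (b + 1 - t) * NN Q ν (t+2) a))
    (hB : B ≤ NN Q ν t b + gg Q (t+2) * NN Q ν (t+1) b) :
    A * B ≤ (3/4) * (gg Q (b + 1 - t) * NN Q ν (t+1) a * NN Q ν t b) := by
  have hs := NN_decay hQ (ν := ν) (a := t+1) (m := a) (e := b + (m₁ + 2)) ha (by omega)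
  have hu := NN_decay hQ (ν := ν) (a := t) (m := b) (e := a + (m₁ + 2)) hbν (by omega)
  obtain ⟨n, rfl⟩ := Nat.exists_eq_add_of_le htb
  rw [show t + n + 1 - t = n + 1 by omega] at *
  have hp := NN_nonneg hQ ν (t+1) a
  have hs0 := NN_nonneg hQ ν (t+2) a
  have hr := NN_nonneg hQ ν t (t+n)
  have hu0 := NN_nonneg hQ ν (t+1) (t+n)
  have g1 := gg_le hQ n
  have g2 := gg_le hQ (t+1)
  have g3 : 2 * gg Q k ≤ gg Q (n+1) := by
    have e1 := gg_succ hQ n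
    have e2 := gg_mono hQ (show k ≤ n by omega)
    have := gg_nonneg hQ n
    nlinarith
  have hk0 := gg_nonneg hQ k
  have hG0 := gg_nonneg hQ (n+1)
  have h32 := pow_ge hQ (show 5 ≤ m₁ + 2 by omega)
  have h5 : gg Q (n+1) * NN Q ν (t+2) a ≤ (1/8) * NN Q ν (t+1) a := by
    have e1 : gg Q (n+1) ≤ 2 * Q ^ (t+n) := g1.trans (mul_le_mul_of_nonneg_left
      (pow_le_pow_right₀ (by linarith) (by omega)) (by norm_num))
    have e2 := mul_le_mul_of_nonneg_right e1 hs0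
    have e3 : NN Q ν (t+2) a * Q ^ (t + n) * 32 ≤ NN Q ν (t+1) a := by
      refine le_trans ?_ hs
      rw [pow_add _ _ (m₁+2), ← mul_assoc]
      exact mul_le_mul_of_nonneg_left (by linarith) (by positivity)
    linarith
  have h6 : gg Q (t+2) * NN Q ν (t+1) (t+n) ≤ (1/8) * NN Q ν t (t+n) := by
    have e1 : gg Q (t+2) ≤ 2 * Q ^ a := g2.trans (mul_le_mul_of_nonneg_left
      (pow_le_pow_right₀ (by linarith) (by omega)) (by norm_num))
    have e2 := mul_le_mul_of_nonneg_right e1 hu0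
    have e3 : NN Q ν (t+1) (t+n) * Q ^ a * 32 ≤ NN Q ν t (t+n) := by
      refine le_trans ?_ hu
      rw [pow_add _ _ (m₁+2), ← mul_assoc]
      exact mul_le_mul_of_nonneg_left (by linarith) (by positivity)
    linarith
  generalize NN Q ν (t+1) a = p at *
  change A ≤ gg Q k * p + (gg Q (n+1) - gg Q k) * (gg Q (n+1) * NN Q ν (t+2) a) at hA
  generalize NN Q ν (t+2) a = s at *
  generalize NN Q ν t (t+n) = r at *
  generalize gg Q k = g at *
  generalize gg Q (n+1) = G at *
  have hA' : A ≤ 5/8 * (G * p) := by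
    have e1 := mul_le_mul_of_nonneg_right g3 hp
    have e2 := mul_le_mul_of_nonneg_left h5 hG0
    nlinarith [mul_nonneg hk0 (mul_nonneg hG0 hs0)]
  have hB' : B ≤ 9/8 * r := by linarith
  calc A * B ≤ (5/8 * (G * p)) * (9/8 * r) := mul_le_mul hA' hB' hB0 (by positivity)
    _ = 45/64 * (G * p * r) := by ring
    _ ≤ 3/4 * (G * p * r) := mul_le_mul_of_nonneg_right (by norm_num) (by positivity)

theorem num5 {Q : ℝ} (hQ : 2 ≤ Q) {ν t m₁ m₂ n : ℕ} (hm₁ : m₁ ≤ ν) (h12 : m₂ < m₁) (ht : 0 < t)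
    (hn : m₂ = t + (n + 1))
    (hdim : 2 * m₁ + m₂ + t + 3 ≤ 2 * ν) {A B : ℝ} (hB0 : 0 ≤ B)
    (hA : A ≤ gg Q (m₁ + 1 - t) * NN Q ν (t+1) m₂)
    (hB : B ≤ NN Q ν t m₁ + gg Q (t+2) * NN Q ν (t+1) m₁) :
    A * B < gg Q (n + 2) * (NN Q ν (t+1) m₁ - Q * gg Q (n+1) / (Q + 1) * NN Q ν (t+2) m₁) * NN Q ν t m₂ := by
  have e1 := num1 hQ hm₁ hn hdim
  have e2 := num2 hQ (ν := ν) h12 (by omega : t + 1 ≤ m₂) hm₁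
  have hu := NN_decay hQ (ν := ν) (a := t) (m := m₁) (e := (m₂ + 1) + (m₁ + 2)) hm₁ (by omega)
  have g2 := gg_le hQ (t+1)
  have hu0 := NN_nonneg hQ ν (t+1) m₁
  have h32 := pow_ge hQ (show 5 ≤ m₁ + 2 by omega)
  have hG := gg_pos hQ (show 0 < n + 2 by omega)
  have hp := NN_pos hQ (ν := ν) (show t + 1 ≤ m₁ by omega) hm₁
  have hR := NN_pos hQ (ν := ν) (show t ≤ m₂ by omega) (by omega)
  have hr := NN_nonneg hQ ν t m₁
  have hG1 := mul_nonneg (gg_nonneg hQ (m₁ + 1 - t)) (NN_nonneg hQ ν (t+1) m₂)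
  have hD : 0 ≤ Q * gg Q (n+1) / (Q + 1) * NN Q ν (t+2) m₁ :=
    mul_nonneg (div_nonneg (mul_nonneg (by linarith) (gg_nonneg hQ _)) (by linarith)) (NN_nonneg hQ _ _ _)
  rw [show m₂ - t = n + 1 by omega, show m₂ + 1 - t = n + 2 by omega] at e2
  have hx : 1 ≤ Q ^ (n+1) := one_le_pow₀ (by linarith)
  have h6 : gg Q (t+2) * NN Q ν (t+1) m₁ * (16 * Q ^ (n+1)) ≤ NN Q ν t m₁ := by
    have a1 : gg Q (t+2) * Q ^ (n+1) ≤ 2 * Q ^ (m₂ + 1) := by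
      have := mul_le_mul_of_nonneg_right g2 (show 0 ≤ Q ^ (n+1) by positivity)
      rw [show m₂ + 1 = (t + 1) + (n + 1) by omega, pow_add _ (t+1) (n+1)]
      change gg Q (t + 2) * Q ^ (n+1) ≤ _ at this
      linarith
    have a2 := mul_le_mul_of_nonneg_right a1 hu0
    have a3 : NN Q ν (t+1) m₁ * Q ^ (m₂ + 1) * 32 ≤ NN Q ν t m₁ := by
      refine le_trans ?_ hu
      rw [pow_add _ _ (m₁+2), ← mul_assoc]
      exact mul_le_mul_of_nonneg_left (by linarith) (by positivity)
    linarith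
  have h7 : Q * gg Q (n+1) / (Q + 1) * NN Q ν (t+2) m₁ * (32 * Q ^ (n+1)) ≤ NN Q ν (t+1) m₁ := by
    refine le_trans ?_ e1
    refine mul_le_mul_of_nonneg_left ?_ hD
    have : Q ^ (5 + (n + 1)) ≤ Q ^ (m₁ + t + 2) := pow_le_pow_right₀ (by linarith) (by omega)
    have h5 := pow_ge hQ (le_refl 5)
    rw [pow_add] at this
    nlinarith
  generalize Q * gg Q (n+1) / (Q + 1) * NN Q ν (t+2) m₁ = D at *
  generalize gg Q (t+2) * NN Q ν (t+1) m₁ = E at *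
  generalize Q ^ (n+1) = x at *
  generalize NN Q ν (t+1) m₁ = p at *
  generalize NN Q ν t m₁ = r at *
  generalize NN Q ν t m₂ = R at *
  generalize gg Q (m₁ + 1 - t) * NN Q ν (t+1) m₂ = A' at *
  generalize gg Q (n+2) = G at *
  have k1 : A * B ≤ A' * (r + E) := mul_le_mul hA hB hB0 hG1
  have hL : 0 < G * p * R := by positivity
  have k2 : A' * (r + E) * (16 * x) ≤ A' * r * (16 * x + 1) := by
    have := mul_le_mul_of_nonneg_left h6 hG1
    linarith
  have k3 : G * p * R * (32 * x - 1) ≤ G * (p - D) * R * (32 * x) := by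
    have := mul_le_mul_of_nonneg_left h7 (mul_pos hG hR).le
    linarith
  have k4 : A' * (r + E) * (16 * x) * (4 * x) ≤ (4 * x - 1) * (G * p * R) * (16 * x + 1) := by
    have a := mul_le_mul_of_nonneg_right k2 (show 0 ≤ 4 * x by linarith)
    have b := mul_le_mul_of_nonneg_right e2 (show 0 ≤ 16 * x + 1 by linarith)
    linarith
  have k5 : (4 * x - 1) * (G * p * R) * (16 * x + 1) < G * p * R * (32 * x - 1) * (2 * x) := by
    have : (4 * x - 1) * (16 * x + 1) < (32 * x - 1) * (2 * x) := by nlinarith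
    have := mul_lt_mul_of_pos_left this hL
    linarith
  have k6 := mul_le_mul_of_nonneg_right k3 (show 0 ≤ 2 * x by linarith)
  have k7 : A' * (r + E) * (64 * x * x) < G * (p - D) * R * (64 * x * x) := by linarith
  exact k1.trans_lt (lt_of_mul_lt_mul_right k7 (by positivity))


def D1 (f : V →ₗ[K] V →ₗ[K] K) (M T : Submodule K V) (m t : ℕ) : Finset (Submodule K V) :=
  (fam f m).filter (fun F => T ≤ F ∧ t + 1 ≤ finrank K ↥(F ⊓ M))

def D2 (f : V →ₗ[K] V →ₗ[K] K) (M T : Submodule K V) (m : ℕ) : Finset (Submodule K V) :=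
  (fam f m).filter (fun F => T ≤ F ∨ F ≤ M)

theorem D_cross {f : V →ₗ[K] V →ₗ[K] K} {a b t : ℕ} {M T : Submodule K V}
    (hM : finrank K M = b + 1) (hT : finrank K T = t) :
    ∀ A ∈ D1 f M T a t, ∀ B ∈ D2 f M T b, t ≤ finrank K ↥(A ⊓ B) := by
  intro A hA B hB
  simp only [D1, D2, mem_filter, mem_fam] at hA hB
  obtain ⟨_, hTA, hA⟩ := hA
  obtain ⟨hB, hB' | hB'⟩ := hB
  · rw [← hT]; exact Submodule.finrank_mono (le_inf hTA hB')
  · have h1 := Submodule.finrank_sup_add_finrank_inf_eq (A ⊓ M) B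
    have h2 : finrank K ↥((A ⊓ M) ⊔ B) ≤ finrank K M :=
      Submodule.finrank_mono (sup_le inf_le_right hB')
    have h3 : finrank K ↥((A ⊓ M) ⊓ B) ≤ finrank K ↥(A ⊓ B) :=
      Submodule.finrank_mono (inf_le_inf_right _ inf_le_left)
    have h4 := hB.2
    omega

theorem D_nontriv {f : V →ₗ[K] V →ₗ[K] K} (halt : ∀ x, f x x = 0)
    (hnd : ∀ x, (∀ y, f x y = 0) → x = 0) {ν : ℕ} (hV : finrank K V = 2 * ν)
    {b t : ℕ} (ht : 0 < t) (hb : b ≤ ν) (htb : t + 1 ≤ b) (hbig : 2 + t + b ≤ 2 * ν)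
    {M T : Submodule K V} (hMi : TotallyIsotropic f M)
    (hM : finrank K M = b + 1) (hTM : T ≤ M) (hT : finrank K T = t) :
    ¬ ∃ T' ∈ polar f t, ∀ F ∈ D2 f M T b, T' ≤ F := by
  rintro ⟨T', hT', h⟩
  have h1 : T' ≤ T := inter_T halt hnd hV hb T T' (TI_mono hTM hMi) (by omega) (by omega)
    (fun B hB hTB => h B (by simp only [D2, mem_filter]; exact ⟨hB, Or.inl hTB⟩))
  have h2 : T' = T := Submodule.eq_of_le_of_finrank_eq h1 (by rw [hT'.2, hT])
  subst h2
  obtain ⟨u, hu, hu0⟩ : ∃ u ∈ T', u ≠ 0 := by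
    apply Submodule.exists_mem_ne_zero_of_ne_bot
    rintro rfl
    simp at hT; omega
  obtain ⟨C, hC⟩ := Submodule.exists_isCompl (Submodule.span K {u})
  have hdC := Submodule.finrank_add_eq_of_isCompl hC
  have hsp := finrank_span_singleton (K := K) hu0
  have huC : u ∉ C := by
    intro h'
    have : u ∈ Submodule.span K {u} ⊓ C := ⟨Submodule.mem_span_singleton_self u, h'⟩
    rw [hC.inf_eq_bot] at this
    exact hu0 (by simpa using this)
  have h3 := Submodule.finrank_sup_add_finrank_inf_eq C M
  have h4 : finrank K ↥(C ⊔ M) ≤ finrank K V := Submodule.finrank_le _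
  obtain ⟨F, hF, hFd⟩ := exists_sub_finrank (C ⊓ M) b (by omega)
  have := h F (by
    simp only [D2, mem_filter, mem_fam]
    exact ⟨⟨TI_mono (hF.trans inf_le_right) hMi, hFd⟩, Or.inr (hF.trans inf_le_right)⟩)
  exact huC ((hF.trans inf_le_left) (this hu))

theorem exists_TI {f : V →ₗ[K] V →ₗ[K] K} (halt : ∀ x, f x x = 0)
    (hnd : ∀ x, (∀ y, f x y = 0) → x = 0) {ν : ℕ} (hV : finrank K V = 2 * ν)
    {m : ℕ} (hm : m ≤ ν) : ∃ M : Submodule K V, TotallyIsotropic f M ∧ finrank K M = m := by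
  have h := count' halt hnd hV hm ⊥ (by intro x hx y hy; simp at hx; simp [hx])
  have h2 := NN_pos (two_le_Q (K := K)) (ν := ν) (show finrank K ↥(⊥ : Submodule K V) ≤ m by simp) hm
  rw [← h] at h2
  have h3 := Finset.card_pos.1 (by exact_mod_cast h2)
  obtain ⟨M, hM⟩ := h3
  simp only [mem_filter, mem_fam] at hM
  exact ⟨M, hM.1⟩

def MaxPair (f : V →ₗ[K] V →ₗ[K] K) (a b t : ℕ) (𝒜 ℬ : Finset (Submodule K V)) : Prop :=
  𝒜 ⊆ fam f a ∧ ℬ ⊆ fam f b ∧ (∀ A ∈ 𝒜, ∀ B ∈ ℬ, t ≤ finrank K ↥(A ⊓ B)) ∧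
  (¬ ∃ T ∈ polar f t, (∀ F ∈ 𝒜, T ≤ F) ∧ (∀ F ∈ ℬ, T ≤ F)) ∧
  ∀ 𝒢 ℋ : Finset (Submodule K V), 𝒢 ⊆ fam f a → ℋ ⊆ fam f b →
    (∀ A ∈ 𝒢, ∀ B ∈ ℋ, t ≤ finrank K ↥(A ⊓ B)) →
    (¬ ∃ T ∈ polar f t, (∀ F ∈ 𝒢, T ≤ F) ∧ (∀ F ∈ ℋ, T ≤ F)) →
    𝒢.card * ℋ.card ≤ 𝒜.card * ℬ.card

theorem MaxPair.symm {f : V →ₗ[K] V →ₗ[K] K} {a b t : ℕ} {𝒜 ℬ : Finset (Submodule K V)}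
    (h : MaxPair f a b t 𝒜 ℬ) : MaxPair f b a t ℬ 𝒜 := by
  obtain ⟨h1, h2, h3, h4, h5⟩ := h
  refine ⟨h2, h1, fun A hA B hB => by rw [inf_comm]; exact h3 B hB A hA, ?_, ?_⟩
  · rintro ⟨T, hT, x, y⟩; exact h4 ⟨T, hT, y, x⟩
  · intro 𝒢 ℋ g1 g2 g3 g4
    rw [mul_comm, mul_comm ℬ.card]
    refine h5 ℋ 𝒢 g2 g1 (fun A hA B hB => by rw [inf_comm]; exact g3 B hB A hA) ?_
    rintro ⟨T, hT, x, y⟩; exact g4 ⟨T, hT, y, x⟩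

theorem MaxPair.closed {f : V →ₗ[K] V →ₗ[K] K} {a b t : ℕ} {𝒜 ℬ : Finset (Submodule K V)}
    (h : MaxPair f a b t 𝒜 ℬ) (hne : 0 < 𝒜.card) {F : Submodule K V} (hF : F ∈ fam f b)
    (hc : ∀ A ∈ 𝒜, t ≤ finrank K ↥(A ⊓ F)) : F ∈ ℬ := by
  by_contra hn
  obtain ⟨h1, h2, h3, h4, h5⟩ := h
  have := h5 𝒜 (insert F ℬ) h1 (Finset.insert_subset hF h2) (by
    intro A hA B hB
    rcases Finset.mem_insert.1 hB with rfl | hB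
    · exact hc A hA
    · exact h3 A hA B hB) (by
    rintro ⟨T, hT, x, y⟩
    exact h4 ⟨T, hT, x, fun F' hF' => y F' (Finset.mem_insert_of_mem hF')⟩)
  rw [Finset.card_insert_of_notMem hn] at this
  nlinarith

theorem MaxPair.ge {f : V →ₗ[K] V →ₗ[K] K} (halt : ∀ x, f x x = 0)
    (hnd : ∀ x, (∀ y, f x y = 0) → x = 0) {ν : ℕ} (hV : finrank K V = 2 * ν)
    {a b t : ℕ} (ht : 0 < t) (hb : b ≤ ν) (htb : t + 1 ≤ b) (hbig : 2 + t + b ≤ 2 * ν)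
    {𝒜 ℬ : Finset (Submodule K V)} (h : MaxPair f a b t 𝒜 ℬ)
    {M T : Submodule K V} (hMi : TotallyIsotropic f M)
    (hM : finrank K M = b + 1) (hTM : T ≤ M) (hT : finrank K T = t) :
    (D1 f M T a t).card * (D2 f M T b).card ≤ 𝒜.card * ℬ.card := by
  refine h.2.2.2.2 _ _ (Finset.filter_subset _ _) (Finset.filter_subset _ _) (D_cross hM hT) ?_
  rintro ⟨T', hT', -, h'⟩
  exact D_nontriv halt hnd hV ht hb htb hbig hMi hM hTM hT ⟨T', hT', h'⟩

theorem D2_ge {f : V →ₗ[K] V →ₗ[K] K} (halt : ∀ x, f x x = 0)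
    (hnd : ∀ x, (∀ y, f x y = 0) → x = 0) {ν : ℕ} (hV : finrank K V = 2 * ν)
    {b : ℕ} (hb : b ≤ ν) (M T : Submodule K V) (hT : TotallyIsotropic f T) :
    NN (Fintype.card K) ν (finrank K T) b +
      (((fam f b).filter (fun F => F ≤ M ∧ ¬ T ≤ F)).card : ℝ) ≤ ((D2 f M T b).card : ℝ) := by
  rw [← count' halt hnd hV hb T hT, ← Nat.cast_add, Nat.cast_le, ← Finset.card_union_of_disjoint]
  · apply Finset.card_le_card
    intro F hF
    simp only [D2, mem_union, mem_filter] at hF ⊢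
    tauto
  · rw [Finset.disjoint_left]
    intro F hF hF'
    simp only [mem_filter] at hF hF'
    tauto

theorem lower1 {f : V →ₗ[K] V →ₗ[K] K} (halt : ∀ x, f x x = 0)
    (hnd : ∀ x, (∀ y, f x y = 0) → x = 0) {ν : ℕ} (hV : finrank K V = 2 * ν)
    {m₁ m₂ t n : ℕ} (ht : 0 < t) (h21 : m₂ ≤ m₁) (hn : m₂ = t + (n + 1))
    (hdim : 2 * m₁ + m₂ + t + 3 ≤ 2 * ν)
    {𝒜 ℬ : Finset (Submodule K V)} (h : MaxPair f m₁ m₂ t 𝒜 ℬ) :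
    gg (Fintype.card K) (n+2) * (NN (Fintype.card K) ν (t+1) m₁ -
      (Fintype.card K : ℝ) * gg (Fintype.card K) (n+1) / ((Fintype.card K : ℝ) + 1) *
        NN (Fintype.card K) ν (t+2) m₁) * NN (Fintype.card K) ν t m₂ ≤
      (𝒜.card : ℝ) * ℬ.card := by
  obtain ⟨M, hMi, hM⟩ := exists_TI halt hnd hV (show m₂ + 1 ≤ ν by omega)
  obtain ⟨T, hTM, hT⟩ := exists_sub_finrank M t (by omega)
  have h1 := h.ge halt hnd hV ht (by omega) (by omega) (by omega) hMi hM hTM hT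
  have h2 := c1_lower halt hnd hV (m := m₁) (n := n+1) (by omega) T M hMi hTM hT (by omega)
  have h3 := D2_ge halt hnd hV (show m₂ ≤ ν by omega) M T (TI_mono hTM hMi)
  rw [hT] at h3
  have h4 : ((D1 f M T m₁ t).card : ℝ) * (D2 f M T m₂).card ≤ (𝒜.card : ℝ) * ℬ.card := by
    exact_mod_cast h1
  refine le_trans ?_ h4
  refine mul_le_mul h2 ?_ (NN_nonneg two_le_Q _ _ _) (Nat.cast_nonneg _)
  refine le_trans ?_ h3
  have : (0:ℝ) ≤ (((fam f m₂).filter (fun F => F ≤ M ∧ ¬ T ≤ F)).card : ℝ) := Nat.cast_nonneg _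
  linarith

theorem lower2 {f : V →ₗ[K] V →ₗ[K] K} (halt : ∀ x, f x x = 0)
    (hnd : ∀ x, (∀ y, f x y = 0) → x = 0) {ν : ℕ} (hV : finrank K V = 2 * ν)
    {m₁ m₂ t : ℕ} (ht : 0 < t) (h21 : m₂ ≤ m₁) (htm : t + 1 ≤ m₂)
    (hdim : 2 * m₁ + m₂ + t + 3 ≤ 2 * ν)
    {𝒜 ℬ : Finset (Submodule K V)} (h : MaxPair f m₁ m₂ t 𝒜 ℬ) :
    (31/32) * (gg (Fintype.card K) (m₂ + 1 - t) * NN (Fintype.card K) ν (t+1) m₁ *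
      NN (Fintype.card K) ν t m₂) ≤ (𝒜.card : ℝ) * ℬ.card := by
  obtain ⟨n, hn⟩ : ∃ n, m₂ = t + (n + 1) := ⟨m₂ - t - 1, by omega⟩
  have h1 := lower1 halt hnd hV ht h21 hn hdim h
  have hQ := two_le_Q (K := K)
  have h2 := num1 hQ (show m₁ ≤ ν by omega) hn hdim
  have h3 := pow_ge hQ (show 5 ≤ m₁ + t + 2 by omega)
  have h0 : 0 ≤ (Fintype.card K : ℝ) * gg (Fintype.card K) (n+1) / ((Fintype.card K : ℝ) + 1) *
        NN (Fintype.card K) ν (t+2) m₁ :=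
    mul_nonneg (div_nonneg (mul_nonneg (by linarith) (gg_nonneg hQ _)) (by linarith)) (NN_nonneg hQ _ _ _)
  have h4 := (mul_le_mul_of_nonneg_left h3 h0).trans h2
  have hG := gg_nonneg hQ (n+2)
  have hR := NN_nonneg hQ ν t m₂
  rw [show m₂ + 1 - t = n + 2 by omega]
  refine le_trans ?_ h1
  have := mul_le_mul_of_nonneg_left h4 (mul_nonneg hG hR)
  linarith

theorem tau {f : V →ₗ[K] V →ₗ[K] K} {a t : ℕ} {ℬ : Finset (Submodule K V)} (hne : 0 < ℬ.card)
    {A : Submodule K V} (hA : A ∈ fam f a) (hc : ∀ B ∈ ℬ, t ≤ finrank K ↥(A ⊓ B)) :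
    ∃ (s : ℕ) (S : Submodule K V), TotallyIsotropic f S ∧ finrank K S = s ∧ t ≤ s ∧ s ≤ a ∧
      (∀ B ∈ ℬ, t ≤ finrank K ↥(S ⊓ B)) ∧
      ∀ X : Submodule K V, TotallyIsotropic f X → finrank K X < s → ∃ B ∈ ℬ, finrank K ↥(X ⊓ B) < t := by
  rw [mem_fam] at hA
  have hex : ∃ s, ∃ S : Submodule K V, TotallyIsotropic f S ∧ finrank K S = s ∧
      ∀ B ∈ ℬ, t ≤ finrank K ↥(S ⊓ B) := ⟨a, A, hA.1, hA.2, hc⟩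
  obtain ⟨S, hS, hSd, hSc⟩ := Nat.find_spec hex
  refine ⟨Nat.find hex, S, hS, hSd, ?_, Nat.find_min' hex ⟨A, hA.1, hA.2, hc⟩, hSc, ?_⟩
  · obtain ⟨B, hB⟩ := Finset.card_pos.1 hne
    rw [← hSd]
    exact (hSc B hB).trans (Submodule.finrank_mono inf_le_left)
  · intro X hX hlt
    have := Nat.find_min hex hlt
    by_contra hcon
    push Not at hcon
    exact this ⟨X, hX, rfl, hcon⟩


theorem hyp_count {f : V →ₗ[K] V →ₗ[K] K} {M T : Submodule K V} (hMi : TotallyIsotropic f M)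
    (hM : finrank K M = 3) (hTM : T ≤ M) (hT : finrank K T = 1) :
    (Fintype.card K : ℝ) ^ 2 ≤ (((fam f 2).filter (fun F => F ≤ M ∧ ¬ T ≤ F)).card : ℝ) := by
  have hQ := two_le_Q (K := K)
  set 𝒜 := (fam f 2).filter (fun F => F ≤ M ∧ ¬ T ≤ F) with h𝒜
  have hmem : ∀ A ∈ 𝒜, TotallyIsotropic f A ∧ finrank K A = 2 ∧ A ≤ M ∧ ¬ T ≤ A := by
    intro A hA
    simp only [h𝒜, mem_filter, mem_fam] at hA
    exact ⟨hA.1.1, hA.1.2, hA.2.1, hA.2.2⟩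
  have hdA : ∀ A ∈ 𝒜, finrank K ↥(A ⊓ M) = 2 := by
    intro A hA
    rw [inf_eq_left.2 (hmem A hA).2.2.1]; exact (hmem A hA).2.1
  have ev : ∀ v ∈ M, v ∉ T →
      (Fintype.card K : ℝ) ≤ ((𝒜.filter (fun A => ⊥ ⊔ Submodule.span K {v} ≤ A)).card : ℝ) := by
    intro v hv hvT
    rw [bot_sup_eq]
    have hv0 : v ≠ 0 := by rintro rfl; exact hvT T.zero_mem
    have hs1 := finrank_span_singleton (K := K) hv0
    have hspM : Submodule.span K {v} ≤ M := by simpa using hv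
    have hd := dcX 𝒜 (Submodule.span K {v}) M
    have e1 : finrank K ↥(M ⊓ Submodule.span K {v}) = 1 := by
      rw [inf_eq_right.2 hspM]; exact hs1
    rw [e1, Finset.sum_congr rfl (fun A hA => by rw [hdA A (Finset.mem_filter.1 hA).1]),
      Finset.sum_const, nsmul_eq_mul] at hd
    have hY : finrank K ↥(T ⊔ Submodule.span K {v}) = 2 := by
      rw [finrank_sup_span T v hvT, hT]
    have hYM : T ⊔ Submodule.span K {v} ≤ M := sup_le hTM hspM
    have h2 : ((univ.filter (fun w : V => w ∈ M ∧ w ∉ T ⊔ Submodule.span K {v})).card : ℝ) ≤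
        ∑ w ∈ univ.filter (fun w : V => w ∈ M ∧ w ∉ Submodule.span K {v}),
        ((𝒜.filter (fun A => Submodule.span K {v} ⊔ Submodule.span K {w} ≤ A)).card : ℝ) := by
      rw [Finset.card_eq_sum_ones, Nat.cast_sum]
      refine (Finset.sum_le_sum (g := fun w => ((𝒜.filter (fun A => Submodule.span K {v} ⊔ Submodule.span K {w} ≤ A)).card : ℝ)) ?_).trans
        (Finset.sum_le_sum_of_subset_of_nonneg ?_ (fun _ _ _ => Nat.cast_nonneg _))
      · intro w hw
        simp only [mem_filter, mem_univ, true_and] at hw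
        have hwv : w ∉ Submodule.span K {v} := fun h => hw.2 ((le_sup_right : _ ≤ T ⊔ _) h)
        have hpos : 0 < (𝒜.filter (fun A => Submodule.span K {v} ⊔ Submodule.span K {w} ≤ A)).card := by
          apply Finset.card_pos.2
          refine ⟨Submodule.span K {v} ⊔ Submodule.span K {w}, ?_⟩
          have hle : Submodule.span K {v} ⊔ Submodule.span K {w} ≤ M := sup_span_le.2 ⟨hspM, hw.1⟩
          have hd2 : finrank K ↥(Submodule.span K {v} ⊔ Submodule.span K {w}) = 2 := by
            rw [finrank_sup_span _ w hwv, hs1]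
          simp only [h𝒜, mem_filter, mem_fam]
          refine ⟨⟨⟨TI_mono hle hMi, hd2⟩, hle, ?_⟩, le_rfl⟩
          intro hcon
          have h3 : T ⊔ Submodule.span K {v} ≤ Submodule.span K {v} ⊔ Submodule.span K {w} :=
            sup_le hcon le_sup_left
          have h4 := Submodule.eq_of_le_of_finrank_eq h3 (by rw [hY, hd2])
          apply hw.2
          rw [h4]
          exact (le_sup_right : Submodule.span K {w} ≤ _) (Submodule.mem_span_singleton_self w)
        have : 1 ≤ (𝒜.filter (fun A => Submodule.span K {v} ⊔ Submodule.span K {w} ≤ A)).card := hpos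
        exact_mod_cast this
      · intro w hw
        simp only [mem_filter, mem_univ, true_and] at hw ⊢
        exact ⟨hw.1, fun h => hw.2 ((le_sup_right : _ ≤ T ⊔ _) h)⟩
    rw [card_diff, inf_eq_right.2 hYM, hY, hM, ← hd] at h2
    have hpos : 0 < (Fintype.card K : ℝ) ^ 2 - (Fintype.card K : ℝ) ^ 1 := by nlinarith
    refine le_of_mul_le_mul_right ?_ hpos
    linarith
  have hd := dcX 𝒜 ⊥ M
  rw [Finset.filter_true_of_mem (fun A _ => bot_le),
    Finset.sum_congr rfl (fun A hA => by rw [hdA A hA]), Finset.sum_const, nsmul_eq_mul] at hd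
  have h2 : ((univ.filter (fun w : V => w ∈ M ∧ w ∉ T)).card : ℝ) * (Fintype.card K : ℝ) ≤
      ∑ v ∈ univ.filter (fun v : V => v ∈ M ∧ v ∉ (⊥ : Submodule K V)),
        ((𝒜.filter (fun A => ⊥ ⊔ Submodule.span K {v} ≤ A)).card : ℝ) := by
    rw [← nsmul_eq_mul, ← Finset.sum_const]
    refine (Finset.sum_le_sum (g := fun v => ((𝒜.filter (fun A => ⊥ ⊔ Submodule.span K {v} ≤ A)).card : ℝ)) ?_).trans
        (Finset.sum_le_sum_of_subset_of_nonneg ?_ (fun _ _ _ => Nat.cast_nonneg _))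
    · intro w hw
      simp only [mem_filter, mem_univ, true_and] at hw
      exact ev w hw.1 hw.2
    · intro w hw
      simp only [mem_filter, mem_univ, true_and] at hw ⊢
      exact ⟨hw.1, fun h => hw.2 (bot_le (a := T) h)⟩
  rw [card_diff, inf_eq_right.2 hTM, hT, hM, ← hd] at h2
  have hz0 : finrank K ↥(M ⊓ (⊥ : Submodule K V)) = 0 := by rw [inf_bot_eq]; simp
  rw [hz0, pow_zero] at h2
  have hpos : 0 < (Fintype.card K : ℝ) ^ 2 - 1 := by nlinarith
  refine le_of_mul_le_mul_right ?_ hpos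
  linarith

theorem num6 {q p R e : ℝ} (hq : 2 ≤ q) (hp : q ^ 7 ≤ p) (hR : R = q ^ 2 * p + q + 1)
    (he : q ^ 2 ≤ e) : p * ((q + 1) * R) < ((q + 1) * p - q) * (R + e) := by
  have h1 : q ^ 3 * p + q ^ 2 * p ≤ ((q+1) * p) * e := by
    have := mul_le_mul_of_nonneg_left he (show 0 ≤ (q+1) * p by
      have : 0 ≤ q ^ 7 := by positivity
      nlinarith)
    linarith
  have h2 : (q * q ^ 7) ≤ q * p := by nlinarith
  have h7 : 128 ≤ q ^ 7 := by
    have := pow_le_pow_left₀ (by norm_num) hq 7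
    norm_num at this; exact this
  have hp0 : 0 < p := by linarith
  have hq2 : 4 ≤ q ^ 2 := by nlinarith
  -- need  ((q+1) p - q) e > q R
  have h3 : q ^ 2 * ((q+1) * p - q) ≤ ((q+1) * p - q) * e := by
    rw [mul_comm]
    refine mul_le_mul_of_nonneg_left he ?_
    nlinarith
  have h4 : q * R < q ^ 2 * ((q+1) * p - q) := by
    rw [hR]
    have h5 : q ^ 2 * q ^ 7 ≤ q ^ 2 * p := mul_le_mul_of_nonneg_left hp (by positivity)
    have h6 : q ^ 2 * 128 ≤ q ^ 2 * q^7 := mul_le_mul_of_nonneg_left h7 (by positivity)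
    have h8 : q ^ 2 * q ^ 2 ≤ q ^ 2 * q ^ 7 * (1/8) := by
      have : q ^ 2 * q ^ 7 = q^4 * q ^ 5 := by ring
      have h32 : 32 ≤ q ^ 5 := by
        have := pow_le_pow_left₀ (by norm_num) hq 5
        norm_num at this; exact this
      have := mul_le_mul_of_nonneg_left h32 (show 0 ≤ q ^ 4 by positivity)
      nlinarith
    have h9 : q ^ 3 ≤ q ^ 2 * q ^ 2 := by nlinarith [show 0 ≤ q ^ 3 by positivity]
    nlinarith
  nlinarith

theorem num7 {q p R A B : ℝ} (hq : 2 ≤ q) (hp : q ^ 7 ≤ p) (hR : R = q ^ 2 * p + q + 1)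
    (hB0 : 0 ≤ B) (hA : A ≤ p + q * (q+1)) (hB : B ≤ R + (q+1) * (q^2+q+1)) :
    A * B < ((q + 1) * p - q) * R := by
  have h7 : 128 ≤ q ^ 7 := by
    have := pow_le_pow_left₀ (by norm_num) hq 7
    norm_num at this; exact this
  have h4 : 16 ≤ q ^ 4 := by
    have := pow_le_pow_left₀ (by norm_num) hq 4
    norm_num at this; exact this
  have hp0 : 0 < p := by linarith
  have a1 : 16 * q ^ 3 ≤ p := by
    have := mul_le_mul_of_nonneg_right h4 (show 0 ≤ q ^ 3 by positivity)
    have e : q ^ 7 = q ^ 4 * q ^ 3 := by ring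
    linarith
  have a2 : 4 ≤ q ^ 2 := by nlinarith
  have a3 : 2 * q ^ 2 ≤ q ^ 3 := by nlinarith
  have b1 : q * (q+1) ≤ p / 16 := by nlinarith
  have b2 : (q+1) * (q^2+q+1) ≤ R / 16 := by nlinarith
  have hA' : A ≤ 17/16 * p := by linarith
  have hB' : B ≤ 17/16 * R := by linarith
  have hR0 : 0 < R := by rw [hR]; positivity
  have : A * B ≤ (17/16 * p) * (17/16 * R) := mul_le_mul hA' hB' hB0 (by positivity)
  have b3 : q ≤ p / 16 := by nlinarith
  have b4 : 2 * p ≤ q * p := by nlinarith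
  have : 2 * p * R ≤ ((q + 1) * p - q) * R := by
    refine mul_le_mul_of_nonneg_right ?_ hR0.le
    linarith
  nlinarith [mul_pos hp0 hR0]

theorem special {f : V →ₗ[K] V →ₗ[K] K} (halt : ∀ x, f x x = 0)
    (hnd : ∀ x, (∀ y, f x y = 0) → x = 0) {ν : ℕ} (hV : finrank K V = 2 * ν)
    {a : ℕ} (ha : a = 2 ∨ a = 3) (hdim : 2 * a + 6 ≤ 2 * ν)
    {𝒜 ℬ : Finset (Submodule K V)} (h : MaxPair f a 2 1 𝒜 ℬ)
    {S T : Submodule K V} (hTS : T ≤ S) (hSd : finrank K S = 2) (hTd : finrank K T = 1)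
    (hTA : ∀ A ∈ 𝒜, T ≤ A)
    (h1 : (𝒜.card : ℝ) ≤ gg (Fintype.card K) 1 * NN (Fintype.card K) ν 2 a +
        (gg (Fintype.card K) 2 - gg (Fintype.card K) 1) *
          (gg (Fintype.card K) 2 * NN (Fintype.card K) ν 3 a))
    (h2 : ∀ B ∈ ℬ, 1 ≤ finrank K ↥(S ⊓ B))
    (h3 : (ℬ.card : ℝ) ≤ gg (Fintype.card K) 2 * NN (Fintype.card K) ν 1 2) : False := by
  have hQ := two_le_Q (K := K)
  obtain ⟨M, hMi, hM⟩ := exists_TI halt hnd hV (show 3 ≤ ν by omega)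
  obtain ⟨L, hLM, hL⟩ := exists_sub_finrank M 1 (by omega)
  have l1 := h.ge halt hnd hV (by omega) (by omega) (by omega) (by omega) hMi hM hLM hL
  have l2 := c1_lower halt hnd hV (m := a) (n := 1) (by omega) L M hMi hLM hL (by omega)
  have l3 := D2_ge halt hnd hV (show 2 ≤ ν by omega) M L (TI_mono hLM hMi)
  have l4 := hyp_count hMi hM hLM hL
  rw [hL] at l3
  have l5 : ((D1 f M L a 1).card : ℝ) * (D2 f M L 2).card ≤ (𝒜.card : ℝ) * ℬ.card := by
    exact_mod_cast l1
  change _ ≤ ((D1 f M L a 1).card : ℝ) at l2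
  have hB0 : (0:ℝ) ≤ ℬ.card := Nat.cast_nonneg _
  have hA0 : (0:ℝ) ≤ 𝒜.card := Nat.cast_nonneg _
  have hR := NN_pos hQ (ν := ν) (show 1 ≤ 2 by omega) (by omega)
  have g2 : gg (Fintype.card K : ℝ) 2 = Fintype.card K + 1 := by
    rw [gg_succ hQ, gg_one hQ]; ring
  have g3 : gg (Fintype.card K : ℝ) 3 = (Fintype.card K : ℝ) ^ 2 + Fintype.card K + 1 := by
    rw [gg_succ hQ, g2]; ring
  have g1 := gg_one hQ
  simp only [Nat.reduceAdd] at l2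
  generalize hD1 : ((D1 f M L a 1).card : ℝ) = d1 at *
  generalize hD2 : ((D2 f M L 2).card : ℝ) = d2 at *
  rcases ha with rfl | rfl
  · rw [NN_self, NN_gt _ _ (show 2 < 3 by omega), g1, g2] at h1 l2
    rw [g2] at h3
    have k1 : (Fintype.card K : ℝ) + 1 ≤ d1 := by linarith
    have k2 : NN (Fintype.card K) ν 1 2 + 4 ≤ d2 := by nlinarith
    have k3 := mul_le_mul k1 k2 (by linarith) (by linarith)
    have k4 := mul_le_mul (show (𝒜.card : ℝ) ≤ 1 by linarith) h3 hB0 (by norm_num)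
    nlinarith
  · have r1 := NN_rec hQ ν (show 1 < 2 by omega)
    have r2 := NN_rec hQ ν (show 2 < 3 by omega)
    simp only [Nat.reduceAdd, Nat.reduceSub, NN_self, mul_one, pow_one] at r1 r2
    have hRp : NN (Fintype.card K) ν 1 2 = (Fintype.card K : ℝ) ^ 2 * NN (Fintype.card K) ν 2 3
        + Fintype.card K + 1 := by
      have hpos : 0 < (Fintype.card K : ℝ) - 1 := by linarith
      refine mul_right_cancel₀ hpos.ne' ?_
      have : (Fintype.card K : ℝ) ^ (2 * (ν - 1)) = (Fintype.card K : ℝ) ^ 2 * (Fintype.card K : ℝ) ^ (2 * (ν - 2)) := by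
        rw [← pow_add]; congr 1; omega
      rw [r1, this]
      linear_combination (-(Fintype.card K : ℝ) ^ 2) * r2
    have hp : (Fintype.card K : ℝ) ^ 7 ≤ NN (Fintype.card K) ν 2 3 := by
      have := NN_decay hQ (ν := ν) (a := 2) (m := 3) (e := 7) (by omega) (by omega)
      simpa [NN_self] using this
    rw [NN_self, g1, g2] at h1 l2
    rw [g2] at h3
    have k1 : ((Fintype.card K : ℝ) + 1) * NN (Fintype.card K) ν 2 3 - Fintype.card K ≤ d1 := by
      refine le_trans (le_of_eq ?_) l2
      have : (Fintype.card K : ℝ) + 1 ≠ 0 := by positivity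
      field_simp
    have hk0 : 0 ≤ ((Fintype.card K : ℝ) + 1) * NN (Fintype.card K) ν 2 3 - Fintype.card K := by
      have : (1:ℝ) ≤ NN (Fintype.card K) ν 2 3 := le_trans (one_le_pow₀ (by linarith)) hp
      nlinarith
    by_cases hall : ∀ A ∈ 𝒜, S ≤ A
    · have c1 := count_le halt hnd hV (show 3 ≤ ν by omega) 𝒜 h.1 S
      rw [Finset.filter_true_of_mem hall, hSd] at c1
      have c2 := num6 hQ hp hRp l4
      have c3 := mul_le_mul c1 h3 hB0 (by linarith [pow_nonneg (show (0:ℝ) ≤ Fintype.card K by linarith) 7])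
      have c4 := mul_le_mul k1 l3 (by positivity) (by linarith)
      linarith
    · push Not at hall
      obtain ⟨A₀, hA₀, hSA⟩ := hall
      have hA₀d : finrank K A₀ = 3 := (mem_fam.1 (h.1 hA₀)).2
      have hinf : S ⊓ A₀ = T := by
        symm
        apply Submodule.eq_of_le_of_finrank_le (le_inf hTS (hTA A₀ hA₀))
        rw [hTd]
        by_contra hcon
        have e1 : S ⊓ A₀ = S := Submodule.eq_of_le_of_finrank_le inf_le_left (by omega)
        exact hSA (inf_eq_left.1 e1)
      set ℬ' := ℬ.filter (fun B => ¬ T ≤ B) with hℬ'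
      have hg3 : 0 ≤ gg (Fintype.card K : ℝ) 3 := gg_nonneg hQ 3
      have c1 := step_cover ℬ' ⊥ S 1 (gg (Fintype.card K : ℝ) 3) hg3
        (by
          intro B hB _
          rw [inf_comm]; exact h2 B (Finset.mem_filter.1 hB).1) (by simp) (by omega) (by
          intro v hv hv0
          rw [bot_sup_eq]
          have hv0 : v ≠ 0 := by simpa using hv0
          have hsd := finrank_span_singleton (K := K) hv0
          by_cases hvT : v ∈ T
          · have e1 : Submodule.span K {v} = T :=
              Submodule.eq_of_le_of_finrank_eq (by simpa using hvT) (by rw [hsd, hTd])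
            rw [e1, Finset.filter_false_of_mem (fun B hB => (Finset.mem_filter.1 hB).2)]
            simpa using hg3
          · have hvA : v ∉ A₀ := by
              intro hc
              apply hvT
              rw [← hinf]; exact ⟨hv, hc⟩
            have hz : Submodule.span K {v} ⊓ A₀ = ⊥ := by
              rw [eq_bot_iff]
              rintro x ⟨hx1, hx2⟩
              obtain ⟨c, rfl⟩ := Submodule.mem_span_singleton.1 hx1
              by_cases hc : c = 0
              · simp [hc]
              · exact absurd ((A₀.smul_mem_iff hc).1 hx2) hvA
            have c2 := step_cover ℬ' (Submodule.span K {v}) A₀ 1 1 (by norm_num)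
              (by
                intro B hB _
                rw [inf_comm]; exact h.2.2.1 A₀ hA₀ B (Finset.mem_filter.1 hB).1)
              (by rw [hz]; simp) (by omega) (by
                intro w hw hwv
                have c3 := count_le halt hnd hV (show 2 ≤ ν by omega) ℬ'
                  ((Finset.filter_subset _ _).trans h.2.1) (Submodule.span K {v} ⊔ Submodule.span K {w})
                rw [finrank_sup_span _ w hwv, hsd, NN_self] at c3
                exact c3)
            rw [hA₀d] at c2
            simpa using c2)
      rw [Finset.filter_true_of_mem (fun B _ => bot_le), hSd] at c1
      have c5 := count_le halt hnd hV (show 2 ≤ ν by omega) ℬ h.2.1 T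
      rw [hTd] at c5
      have c6 := Finset.card_filter_add_card_filter_not (s := ℬ) (fun B => T ≤ B)
      have c7 : (ℬ.card : ℝ) = ((ℬ.filter (fun B => T ≤ B)).card : ℝ) + (ℬ'.card : ℝ) := by
        rw [← c6]; push_cast; rfl
      simp only [Nat.reduceAdd, Nat.reduceSub] at c1
      rw [g2, g3] at c1
      have c8 := num7 hQ hp hRp hB0 (A := 𝒜.card) (B := ℬ.card) (by linarith) (by linarith)
      have hq2 : (0:ℝ) ≤ (Fintype.card K : ℝ) ^ 2 := by positivity
      have c9 := mul_le_mul k1 (show NN (Fintype.card K) ν 1 2 ≤ d2 by linarith) hR.le (by linarith)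
      linarith


theorem cover_le {S A : Submodule K V} {t : ℕ} (hS : finrank K S = t)
    (h : t ≤ finrank K ↥(S ⊓ A)) : S ≤ A := by
  have e1 : S ⊓ A = S := Submodule.eq_of_le_of_finrank_le inf_le_left (by omega)
  exact inf_eq_left.1 e1

theorem bound1 {f : V →ₗ[K] V →ₗ[K] K} (halt : ∀ x, f x x = 0)
    (hnd : ∀ x, (∀ y, f x y = 0) → x = 0) {ν : ℕ} (hV : finrank K V = 2 * ν)
    {a b t s s' : ℕ} (ha : a ≤ ν) (hb : t ≤ b) (𝒜 ℬ : Finset (Submodule K V)) (h𝒜 : 𝒜 ⊆ fam f a)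
    (hℬ : ℬ ⊆ fam f b) (hcross : ∀ A ∈ 𝒜, ∀ B ∈ ℬ, t ≤ finrank K ↥(A ⊓ B))
    (hts : t ≤ s)
    (hs : ∀ X : Submodule K V, TotallyIsotropic f X → finrank K X < s →
      ∃ B ∈ ℬ, finrank K ↥(X ⊓ B) < t)
    (S : Submodule K V) (hS : finrank K S = s') (hts' : t ≤ s')
    (hSc : ∀ A ∈ 𝒜, t ≤ finrank K ↥(S ⊓ A)) :
    (𝒜.card : ℝ) ≤ gb (Fintype.card K) s' t *
      (gg (Fintype.card K) (b + 1 - t) ^ (s - t) * NN (Fintype.card K) ν s a) := by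
  rw [← hS]
  refine coverbound 𝒜 S t _ (by omega) (fun A hA => by rw [inf_comm]; exact hSc A hA) ?_
  intro T _ hT
  exact chain halt hnd hV ha hb 𝒜 ℬ h𝒜 hℬ hcross hs (s - t) T (by omega)

theorem branch {f : V →ₗ[K] V →ₗ[K] K} (halt : ∀ x, f x x = 0)
    (hnd : ∀ x, (∀ y, f x y = 0) → x = 0) {ν : ℕ} (hV : finrank K V = 2 * ν)
    {a b t m₁ : ℕ} (ht : 0 < t) (ham : a ≤ m₁) (hbm : b ≤ m₁) (hta : t + 1 ≤ a) (htb : t + 1 ≤ b)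
    (hdim : m₁ + a + b + t + 3 ≤ 2 * ν)
    (hcase : 2 * t < b ∨ (b = 2 ∧ t = 1 ∧ (a = 2 ∨ a = 3)))
    {𝒜 ℬ : Finset (Submodule K V)} (h : MaxPair f a b t 𝒜 ℬ)
    (hlow : (31/32) * (gg (Fintype.card K) (b + 1 - t) * NN (Fintype.card K) ν (t+1) a *
      NN (Fintype.card K) ν t b) ≤ (𝒜.card : ℝ) * ℬ.card)
    (h𝒜0 : 0 < 𝒜.card)
    {T S₀ : Submodule K V} (hT : TotallyIsotropic f T) (hTd : finrank K T = t)
    (hTA : ∀ A ∈ 𝒜, T ≤ A)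
    (hS₀ : TotallyIsotropic f S₀) (hS₀d : finrank K S₀ = t + 1)
    (hS₀c : ∀ B ∈ ℬ, t ≤ finrank K ↥(S₀ ⊓ B)) :
    ∃ M : Submodule K V, TotallyIsotropic f M ∧ finrank K M = b + 1 ∧ T ≤ M ∧
      𝒜 ⊆ D1 f M T a t ∧ ℬ ⊆ D2 f M T b ∧
      (𝒜.card : ℝ) ≤ gg (Fintype.card K) (b + 1 - t) * NN (Fintype.card K) ν (t+1) a ∧
      (ℬ.card : ℝ) ≤ NN (Fintype.card K) ν t b +
          gg (Fintype.card K) (t+2) * NN (Fintype.card K) ν (t+1) b := by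
  have hQ := two_le_Q (K := K)
  have haν : a ≤ ν := by omega
  have hbν : b ≤ ν := by omega
  have hfull : ∀ B ∈ fam f b, T ≤ B → B ∈ ℬ := by
    intro B hB hTB
    refine h.closed h𝒜0 hB (fun A hA => ?_)
    rw [← hTd]
    exact Submodule.finrank_mono (le_inf (hTA A hA) hTB)
  obtain ⟨B₀, hB₀, hTB₀⟩ : ∃ B₀ ∈ ℬ, ¬ T ≤ B₀ := by
    by_contra hcon
    push Not at hcon
    exact h.2.2.2.1 ⟨T, ⟨hT, hTd⟩, hTA, hcon⟩
  obtain ⟨k, M, hTM, hMd, hk1, hk2, hA, hcov, hB1, hB2, hlast⟩ :=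
    star halt hnd hV haν hbν htb (by omega) 𝒜 ℬ h.1 h.2.1 h.2.2.1 T hT hTd hTA hfull B₀ hB₀ hTB₀
      S₀ hS₀ hS₀d hS₀c
  have hB0 : (0:ℝ) ≤ ℬ.card := Nat.cast_nonneg _
  have hL : 0 < gg (Fintype.card K : ℝ) (b + 1 - t) * NN (Fintype.card K) ν (t+1) a *
      NN (Fintype.card K) ν t b :=
    mul_pos (mul_pos (gg_pos hQ (by omega)) (NN_pos hQ hta haν)) (NN_pos hQ (by omega) hbν)
  rcases Nat.eq_or_lt_of_le hk2 with hk | hk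
  · obtain ⟨hMi, h1, h2⟩ := hlast hk
    refine ⟨M, hMi, by omega, hTM, ?_, ?_, ?_, hB2 (by omega)⟩
    · intro A hA
      simp only [D1, mem_filter]
      exact ⟨h.1 hA, hTA A hA, h1 A hA⟩
    · intro B hB
      simp only [D2, mem_filter]
      exact ⟨h.2.1 hB, h2 B hB⟩
    · rw [hk] at hA
      linarith
  · exfalso
    rcases Nat.eq_or_lt_of_le hk1 with hk' | hk'
    · subst hk'
      rcases hcase with hc | ⟨rfl, rfl, hc⟩
      · have := num4a hQ haν hc (show 3 ≤ m₁ by omega) hdim hB0 hA (hB1 rfl)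
        linarith
      · exact special halt hnd hV hc (by omega) h hTM hMd hTd hTA hA (hcov rfl) (hB1 rfl)
    · have := num4b hQ haν hbν hta (show 3 ≤ m₁ by omega) (show k ≤ b - t by omega) (by omega) hdim
        hB0 hA (hB2 hk')
      linarith

theorem eq_of_prod {α : Type*} {A A' B B' : Finset α} (hA : A ⊆ A') (hB : B ⊆ B')
    (h : A'.card * B'.card ≤ A.card * B.card) (h0 : 0 < A.card * B.card) : A = A' ∧ B = B' := by
  have h1 := Finset.card_le_card hA
  have h2 := Finset.card_le_card hB
  have ha : 0 < A.card := Nat.pos_of_mul_pos_right h0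
  have hb : 0 < B.card := Nat.pos_of_mul_pos_left h0
  constructor
  · apply Finset.eq_of_subset_of_card_le hA
    by_contra hc
    push Not at hc
    nlinarith
  · apply Finset.eq_of_subset_of_card_le hB
    by_contra hc
    push Not at hc
    nlinarith

theorem mainFin {f : V →ₗ[K] V →ₗ[K] K} (halt : ∀ x, f x x = 0)
    (hnd : ∀ x, (∀ y, f x y = 0) → x = 0) {ν : ℕ} (hV : finrank K V = 2 * ν)
    {m₁ m₂ t : ℕ} (ht : 0 < t) (h21 : m₂ ≤ m₁) (htm : t + 1 ≤ m₂)
    (hdim : 2 * m₁ + m₂ + t + 3 ≤ 2 * ν)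
    (hcase : 2 * t < m₂ ∨ (m₁ = 2 ∧ m₂ = 2 ∧ t = 1) ∨ (m₁ = 3 ∧ m₂ = 2 ∧ t = 1))
    {𝒜 ℬ : Finset (Submodule K V)} (h : MaxPair f m₁ m₂ t 𝒜 ℬ) :
    ∃ M ∈ polar f (m₂ + 1), ∃ T : Submodule K V, T ≤ M ∧ finrank K T = t ∧
      ((𝒜 = D1 f M T m₁ t ∧ ℬ = D2 f M T m₂) ∨
        (m₁ = m₂ ∧ 𝒜 = D2 f M T m₁ ∧ ℬ = D1 f M T m₂ t)) := by
  have hQ := two_le_Q (K := K)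
  have hm₁ν : m₁ ≤ ν := by omega
  have hm₂ν : m₂ ≤ ν := by omega
  have hlow := lower2 halt hnd hV ht h21 htm hdim h
  have hL : 0 < gg (Fintype.card K : ℝ) (m₂ + 1 - t) * NN (Fintype.card K) ν (t+1) m₁ *
      NN (Fintype.card K) ν t m₂ :=
    mul_pos (mul_pos (gg_pos hQ (by omega)) (NN_pos hQ (by omega) hm₁ν)) (NN_pos hQ (by omega) hm₂ν)
  have hn2 := num2' hQ (ν := ν) h21 htm hm₁ν
  have hprod : 0 < 𝒜.card * ℬ.card := by
    have : (0:ℝ) < (𝒜.card : ℝ) * ℬ.card := by linarith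
    exact_mod_cast this
  have hA0 : 0 < 𝒜.card := Nat.pos_of_mul_pos_right hprod
  have hB0 : 0 < ℬ.card := Nat.pos_of_mul_pos_left hprod
  obtain ⟨A₁, hA₁⟩ := Finset.card_pos.1 hA0
  obtain ⟨B₁, hB₁⟩ := Finset.card_pos.1 hB0
  obtain ⟨s₂, S₂, hS₂, hS₂d, hts₂, hs₂m, hS₂c, hS₂min⟩ := tau hB0 (h.1 hA₁) (fun B hB => h.2.2.1 A₁ hA₁ B hB)
  obtain ⟨s₁, S₁, hS₁, hS₁d, hts₁, hs₁m, hS₁c, hS₁min⟩ := tau hA0 (h.2.1 hB₁)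
    (fun A hA => h.symm.2.2.1 B₁ hB₁ A hA)
  have u1 := bound1 halt hnd hV hm₁ν (show t ≤ m₂ by omega) 𝒜 ℬ h.1 h.2.1 h.2.2.1 hts₂ hS₂min
    S₁ hS₁d hts₁ hS₁c
  have u2 := bound1 halt hnd hV hm₂ν (show t ≤ m₁ by omega) ℬ 𝒜 h.2.1 h.1 h.symm.2.2.1 hts₁ hS₁min
    S₂ hS₂d hts₂ hS₂c
  obtain ⟨i, rfl⟩ : ∃ i, s₁ = t + i := ⟨s₁ - t, by omega⟩
  obtain ⟨j, rfl⟩ : ∃ j, s₂ = t + j := ⟨s₂ - t, by omega⟩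
  rw [show t + j - t = j by omega] at u1
  rw [show t + i - t = i by omega] at u2
  have hu : (𝒜.card : ℝ) * ℬ.card ≤ GG (Fintype.card K) ν t m₂ m₁ i * GG (Fintype.card K) ν t m₁ m₂ j := by
    refine (mul_le_mul u1 u2 (Nat.cast_nonneg _) ((Nat.cast_nonneg _).trans u1)).trans (le_of_eq ?_)
    unfold GG
    ring
  rcases Nat.eq_zero_or_pos i with rfl | hi
  · have hSA : ∀ A ∈ 𝒜, S₁ ≤ A := fun A hA => cover_le hS₁d (hS₁c A hA)
    rcases Nat.lt_or_ge j 2 with hj | hj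
    · rcases Nat.eq_zero_or_pos j with rfl | hj0
      · exfalso
        have hSB : ∀ B ∈ ℬ, S₂ ≤ B := fun B hB => cover_le hS₂d (hS₂c B hB)
        have hle : S₂ ≤ S₁ := inter_T halt hnd hV hm₂ν S₁ S₂ hS₁ (by omega) (by omega) (by
          intro B hB hTB
          refine hSB B (h.closed hA0 hB (fun A hA => ?_))
          have := Submodule.finrank_mono (le_inf (hSA A hA) hTB)
          omega)
        have he : S₂ = S₁ := Submodule.eq_of_le_of_finrank_eq hle (by omega)
        subst he
        exact h.2.2.2.1 ⟨S₂, ⟨hS₁, by omega⟩, hSA, hSB⟩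
      · obtain rfl : j = 1 := by omega
        obtain ⟨M, hMi, hMd, hTM, k1, k2, -, -⟩ := branch halt hnd hV ht le_rfl h21 (by omega) htm (by omega)
          (by rcases hcase with hc | hc | hc
              · exact Or.inl hc
              · exact Or.inr ⟨hc.2.1, hc.2.2, Or.inl hc.1⟩
              · exact Or.inr ⟨hc.2.1, hc.2.2, Or.inr hc.1⟩) h hlow hA0 hS₁ (by omega) hSA hS₂ hS₂d hS₂c
        have hg := h.ge halt hnd hV ht hm₂ν htm (by omega) hMi hMd hTM (by omega)
        exact ⟨M, ⟨hMi, hMd⟩, S₁, hTM, by omega, Or.inl (eq_of_prod k1 k2 hg hprod)⟩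
    · exfalso
      have := num3a hQ (m₁ := m₁) (t := t) hm₁ν (show t ≤ m₂ by omega) (by omega) (by omega) hj (by omega)
      rw [GG_zero hQ] at hu
      linarith
  · rcases Nat.eq_zero_or_pos j with rfl | hj
    · have hSB : ∀ B ∈ ℬ, S₂ ≤ B := fun B hB => cover_le hS₂d (hS₂c B hB)
      rcases Nat.lt_or_ge i 2 with hi2 | hi2
      · obtain rfl : i = 1 := by omega
        obtain ⟨M, hMi, hMd, hTM, k1, k2, k3, k4⟩ := branch halt hnd hV (m₁ := m₁) ht h21 le_rfl htm (by omega) (by omega)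
          (by rcases hcase with hc | hc | hc
              · left; omega
              · exact Or.inr ⟨hc.1, hc.2.2, Or.inl hc.2.1⟩
              · left; omega) h.symm (by
                rw [mul_comm (ℬ.card : ℝ)]
                refine le_trans ?_ hlow
                linarith) hB0 hS₂ (by omega) hSB hS₁ hS₁d hS₁c
        rcases Nat.eq_or_lt_of_le h21 with he | hlt
        · subst he
          have hg := h.symm.ge halt hnd hV ht hm₂ν htm (by omega) hMi hMd hTM (by omega)
          have he := eq_of_prod k1 k2 hg (by rw [mul_comm]; exact hprod)
          exact ⟨M, ⟨hMi, hMd⟩, S₂, hTM, by omega, Or.inr ⟨rfl, he.2, he.1⟩⟩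
        · exfalso
          obtain ⟨n, hn⟩ : ∃ n, m₂ = t + (n + 1) := ⟨m₂ - t - 1, by omega⟩
          have z1 := lower1 halt hnd hV ht h21 hn hdim h
          have z2 := num5 hQ hm₁ν hlt ht hn hdim (Nat.cast_nonneg _) k3 k4
          linarith
      · exfalso
        have := num3a hQ (m₁ := m₁) (t := t) hm₂ν (show t ≤ m₁ by omega) (by omega) (by omega) hi2 (by omega)
        rw [GG_zero hQ] at hu
        linarith
    · exfalso
      have := num3b hQ hm₁ν h21 htm hdim hi hj (by omega) (by omega)
      linarith

end Work

theorem stmt_3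
    (q ν m₁ m₂ t : ℕ) (hq : IsPrimePow q)
    {K : Type} [Field K] [Fintype K] (hK : Fintype.card K = q)
    (f : (Fin (2 * ν) → K) →ₗ[K] (Fin (2 * ν) → K) →ₗ[K] K)
    (halt : ∀ x, f x x = 0)
    (hnd : ∀ x, (∀ y, f x y = 0) → x = 0)
    (hν : 0 < ν) (ht : 0 < t)
    (hm : m₂ ≤ m₁) (hmt : t + 1 ≤ m₂) (hdim : 2 * m₁ + m₂ + t + 3 ≤ 2 * ν)
    (hcase : 2 * t < m₂ ∨ (m₁, m₂, t) = (2, 2, 1) ∨ (m₁, m₂, t) = (3, 2, 1))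
    (ℱ₁ ℱ₂ : Set (Submodule K (Fin (2 * ν) → K)))
    (h1 : ℱ₁ ⊆ polar f m₁) (h2 : ℱ₂ ⊆ polar f m₂)
    (hcross : ∀ F₁ ∈ ℱ₁, ∀ F₂ ∈ ℱ₂, t ≤ finrank K ↥(F₁ ⊓ F₂))
    (hnt : ¬ ∃ T ∈ polar f t, (∀ F ∈ ℱ₁, T ≤ F) ∧ (∀ F ∈ ℱ₂, T ≤ F))
    (hmax : ∀ 𝒢₁ 𝒢₂ : Set (Submodule K (Fin (2 * ν) → K)),
      𝒢₁ ⊆ polar f m₁ → 𝒢₂ ⊆ polar f m₂ →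
      (∀ G₁ ∈ 𝒢₁, ∀ G₂ ∈ 𝒢₂, t ≤ finrank K ↥(G₁ ⊓ G₂)) →
      (¬ ∃ T ∈ polar f t, (∀ F ∈ 𝒢₁, T ≤ F) ∧ (∀ F ∈ 𝒢₂, T ≤ F)) →
      𝒢₁.ncard * 𝒢₂.ncard ≤ ℱ₁.ncard * ℱ₂.ncard) :
    ∃ M ∈ polar f (m₂ + 1), ∃ T : Submodule K (Fin (2 * ν) → K),
      T ≤ M ∧ finrank K T = t ∧
      ((ℱ₁ = C1 f M T m₁ t ∧ ℱ₂ = C2 f M T m₂) ∨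
        (m₁ = m₂ ∧ ℱ₁ = C2 f M T m₁ ∧ ℱ₂ = C1 f M T m₂ t)) := by
  classical
  have hV : finrank K (Fin (2 * ν) → K) = 2 * ν := by simp
  have hsub : ∀ (𝒢 : Finset (Submodule K (Fin (2 * ν) → K))) (m : ℕ), 𝒢 ⊆ fam f m →
      (𝒢 : Set (Submodule K (Fin (2 * ν) → K))) ⊆ polar f m := by
    intro 𝒢 m h F hF
    exact mem_fam.1 (h hF)
  have hmp : MaxPair f m₁ m₂ t (Set.toFinite ℱ₁).toFinset (Set.toFinite ℱ₂).toFinset := by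
    refine ⟨fun F hF => mem_fam.2 (h1 (by simpa using hF)), fun F hF => mem_fam.2 (h2 (by simpa using hF)),
      fun A hA B hB => hcross A (by simpa using hA) B (by simpa using hB), ?_, ?_⟩
    · rintro ⟨T, hT, x, y⟩
      exact hnt ⟨T, hT, fun F hF => x F (by simpa using hF), fun F hF => y F (by simpa using hF)⟩
    · intro 𝒢 ℋ g1 g2 g3 g4
      have := hmax (𝒢 : Set _) (ℋ : Set _) (hsub 𝒢 _ g1) (hsub ℋ _ g2)
        (fun A hA B hB => g3 A (by simpa using hA) B (by simpa using hB)) (by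
          rintro ⟨T, hT, x, y⟩
          exact g4 ⟨T, hT, fun F hF => x F (by simpa using hF), fun F hF => y F (by simpa using hF)⟩)
      rwa [Set.ncard_coe_finset, Set.ncard_coe_finset, Set.ncard_eq_toFinset_card ℱ₁,
        Set.ncard_eq_toFinset_card ℱ₂] at this
  obtain ⟨M, hM, T, hTM, hT, hc⟩ := mainFin halt hnd hV ht hm hmt hdim (by simpa using hcase) hmp
  have e1 : ∀ m, ((D1 f M T m t : Finset _) : Set (Submodule K (Fin (2 * ν) → K))) = C1 f M T m t := by
    intro m; ext F
    simp only [D1, C1, Finset.coe_filter, mem_fam]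
  have e2 : ∀ m, ((D2 f M T m : Finset _) : Set (Submodule K (Fin (2 * ν) → K))) = C2 f M T m := by
    intro m; ext F
    simp only [D2, C2, Finset.coe_filter, mem_fam, Set.mem_union, Set.mem_ofPred_eq]
    tauto
  refine ⟨M, hM, T, hTM, hT, ?_⟩
  rcases hc with ⟨a, b⟩ | ⟨e, a, b⟩
  · left
    rw [← e1, ← e2, ← a, ← b]
    simp
  · right
    rw [← e1, ← e2, ← a, ← b]
    simp [e]

end
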